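/- Let n ≥ 1, 1 ≤ p₀ ≤ p₁ < ∞, 0 < s₀ ≤ s₁ < ∞, q ∈ [1,∞), and set σ = s₁ − s₀ + n(1/p₀ − 1/p₁). Assume 0 < σ < 2, 0 ≤ k₀ < 1, and set k₁ = k₀ + σ/2 − 1. Then there is a constant C > 0 such that: for every T ∈ (0,1] and every map u : (0,T) × ℝⁿ → ℝ which is continuous in t and Schwartz class in x for each t, if N := sup_{0<t<T} t^{k₀} ‖u(t)‖_{B^{s₀}_{p₀,q}} < ∞, then for every t ∈ (0,T), t^{k₁} ‖ ∫₀ᵗ e^{(t−s)Δ} u(s) ds ‖_{B^{s₁}_{p₁,q}} ≤ C N. -/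

import Mathlib

open MeasureTheory Real Filter
open scoped ENNReal FourierTransform

noncomputable section

/-- `ℝⁿ` as a Euclidean space. -/
abbrev Rn (n : ℕ) : Type := EuclideanSpace ℝ (Fin n)

variable {n : ℕ}

/-- The Fourier transform of a real-valued Schwartz function, viewed as a ℂ-valued function. -/
def ftC (f : SchwartzMap (Rn n) ℝ) : Rn n → ℂ :=
  𝓕 (fun x => (f x : ℂ))

/-- `ψ₀` is a Littlewood–Paley function: an even, radial Schwartz function whose Fourier
transform is nonnegative, supported in the annulus `{ξ : 1/2 < ‖ξ‖ < 2}`, and satisfies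
`∑_{j ∈ ℤ} ψ̂₀(2^{-j} ξ) = 1` for `ξ ≠ 0`. -/
structure IsLPF (n : ℕ) (ψ₀ : SchwartzMap (Rn n) ℝ) : Prop where
  even : ∀ x : Rn n, ψ₀ (-x) = ψ₀ x
  radial : ∀ x y : Rn n, ‖x‖ = ‖y‖ → ψ₀ x = ψ₀ y
  ft_im : ∀ ξ : Rn n, (ftC ψ₀ ξ).im = 0
  ft_nonneg : ∀ ξ : Rn n, 0 ≤ (ftC ψ₀ ξ).re
  ft_supp : ∀ ξ : Rn n, ftC ψ₀ ξ ≠ 0 → 1/2 < ‖ξ‖ ∧ ‖ξ‖ < 2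
  ft_sum : ∀ ξ : Rn n, ξ ≠ 0 → HasSum (fun j : ℤ => ftC ψ₀ ((2:ℝ) ^ (-j) • ξ)) 1

/-- The Littlewood–Paley kernel `ψ_j(x) = 2^{jn} ψ₀(2^j x)`, whose Fourier transform is
`ψ̂₀(2^{-j} ξ)`. -/
def lpKernel (ψ₀ : SchwartzMap (Rn n) ℝ) (j : ℤ) (x : Rn n) : ℝ :=
  (2:ℝ) ^ (j * (n:ℤ)) * ψ₀ ((2:ℝ) ^ j • x)

/-- The Littlewood–Paley projection `Δ_j f = ψ_j ∗ f`. -/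
def lpProj (ψ₀ : SchwartzMap (Rn n) ℝ) (j : ℤ) (f : Rn n → ℝ) : Rn n → ℝ :=
  MeasureTheory.convolution (lpKernel ψ₀ j) f (ContinuousLinearMap.mul ℝ ℝ) volume

/-- `S_j f = ∑_{m ≤ j} Δ_m f`, the low-frequency cutoff; this is the L² function whose
Fourier transform is `(∑_{m ≤ j} ψ̂₀(2^{-m} ξ)) f̂(ξ)`. -/
def lowProj (ψ₀ : SchwartzMap (Rn n) ℝ) (j : ℤ) (f : Rn n → ℝ) (x : Rn n) : ℝ :=
  ∑' m : ℤ, if m ≤ j then lpProj ψ₀ m f x else 0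

/-- `Ψ` is the low-frequency piece of the Littlewood–Paley decomposition:
`Ψ̂ = 1 − ∑_{k ≥ 0} ψ̂_k`. -/
def IsLowPiece (ψ₀ Ψ : SchwartzMap (Rn n) ℝ) : Prop :=
  ∀ ξ : Rn n, ftC Ψ ξ = 1 - ∑' k : ℕ, ftC ψ₀ ((2:ℝ) ^ (-(k:ℤ)) • ξ)

/-- The inhomogeneous Besov norm `‖f‖_{B^s_{p,q}}`, valued in `[0,∞]`:
`‖Ψ∗f‖_{L^p} + (∑_{j ≥ 0} (2^{js} ‖Δ_j f‖_{L^p})^q)^{1/q}`, with the supremum over `j`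
replacing the `ℓ^q` sum when `q = ∞`. -/
def besovNorm (ψ₀ Ψ : SchwartzMap (Rn n) ℝ) (s : ℝ) (p q : ℝ≥0∞) (f : Rn n → ℝ) : ℝ≥0∞ :=
  eLpNorm (MeasureTheory.convolution (fun x => Ψ x) f (ContinuousLinearMap.mul ℝ ℝ) volume)
      p volume +
    (if q = ∞ then
      ⨆ j : ℕ, ENNReal.ofReal ((2:ℝ) ^ ((j:ℝ) * s)) * eLpNorm (lpProj ψ₀ (j:ℤ) f) p volume
    else
      (∑' j : ℕ, (ENNReal.ofReal ((2:ℝ) ^ ((j:ℝ) * s)) *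
        eLpNorm (lpProj ψ₀ (j:ℤ) f) p volume) ^ q.toReal) ^ (1 / q.toReal))

/-- The heat semigroup `e^{tΔ} f = h_t ∗ f` with `h_t(x) = (4πt)^{-n/2} e^{-‖x‖²/(4t)}`. -/
def heatOp (n : ℕ) (t : ℝ) (f : Rn n → ℝ) : Rn n → ℝ :=
  MeasureTheory.convolution
    (fun x : Rn n => (4 * π * t) ^ (-(n:ℝ)/2) * Real.exp (-‖x‖^2 / (4*t))) f
    (ContinuousLinearMap.mul ℝ ℝ) volume

/-- The partial derivative `∂_{x_i} f`. -/
def pderiv' (i : Fin n) (f : Rn n → ℝ) (x : Rn n) : ℝ :=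
  fderiv ℝ f x (EuclideanSpace.single i 1)

/-- The Laplacian `Δf = ∑ᵢ ∂²_{x_i} f`. -/
def lapl (f : Rn n → ℝ) (x : Rn n) : ℝ :=
  ∑ i : Fin n, pderiv' i (pderiv' i f) x

theorem jensen_w {α : Type*} [MeasurableSpace α] (μ : Measure α) {p : ℝ} (hp : 1 ≤ p)
    (w f : α → ℝ≥0∞) (hw : AEMeasurable w μ) (hf : AEMeasurable f μ) (hwt : ∀ᵐ a ∂μ, w a ≠ ∞) :
    (∫⁻ a, w a * f a ∂μ) ^ p ≤ (∫⁻ a, w a ∂μ) ^ (p - 1) * ∫⁻ a, w a * f a ^ p ∂μ := by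
  rcases eq_or_lt_of_le hp with h1 | h1
  · subst h1; simp
  have hpq : p.HolderConjugate (p / (p - 1)) := Real.HolderConjugate.conjExponent h1
  have hq := hpq.symm
  have h := ENNReal.lintegral_mul_le_Lp_mul_Lq μ hq (f := fun a => w a ^ (1 - 1/p))
    (g := fun a => w a ^ (1/p) * f a) (by fun_prop) (by fun_prop)
  have e1 : ∫⁻ a, ((fun a => w a ^ (1 - 1/p)) * (fun a => w a ^ (1/p) * f a)) a ∂μ
      = ∫⁻ a, w a * f a ∂μ := by
    refine lintegral_congr_ae ?_
    filter_upwards [hwt] with a ha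
    simp only [Pi.mul_apply]
    rw [← mul_assoc, ← ENNReal.rpow_add_of_nonneg _ _ (by
      rw [sub_nonneg, div_le_one] <;> linarith) (by positivity)]
    simp
  rw [e1] at h
  have e2 : ∀ a, (w a ^ (1 - 1/p)) ^ (p / (p - 1)) = w a := by
    intro a
    rw [← ENNReal.rpow_mul]
    have : (1 - 1/p) * (p / (p - 1)) = 1 := by
      have : p - 1 ≠ 0 := by linarith
      field_simp
    rw [this, ENNReal.rpow_one]
  have e3 : ∀ a, (w a ^ (1/p) * f a) ^ p = w a * f a ^ p := by
    intro a
    rw [ENNReal.mul_rpow_of_nonneg _ _ (by linarith), ← ENNReal.rpow_mul]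
    have : 1/p * p = 1 := by field_simp
    rw [this, ENNReal.rpow_one]
  simp only [e2, e3] at h
  calc _ ≤ _ := ENNReal.rpow_le_rpow h (by linarith)
    _ = _ := by
      rw [ENNReal.mul_rpow_of_nonneg _ _ (by linarith), ← ENNReal.rpow_mul, ← ENNReal.rpow_mul]
      have h3 : 1/p * p = 1 := by field_simp
      have h4 : 1 / (p / (p-1)) * p = p - 1 := by field_simp
      rw [h3, h4, ENNReal.rpow_one]

theorem minkowski_int {α β : Type*} [MeasurableSpace α] [MeasurableSpace β] (μ : Measure α)
    (ν : Measure β) [SFinite μ] [SFinite ν] {p : ℝ} (hp : 1 ≤ p) (f : α → β → ℝ≥0∞)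
    (hf : Measurable (Function.uncurry f)) :
    (∫⁻ x, (∫⁻ y, f x y ∂ν) ^ p ∂μ) ^ (1/p) ≤ ∫⁻ y, (∫⁻ x, f x y ^ p ∂μ) ^ (1/p) ∂ν := by
  have hp0 : 0 < p := by linarith
  set a : β → ℝ≥0∞ := fun y => (∫⁻ x, f x y ^ p ∂μ) ^ (1/p) with ha
  have hfm : Measurable (fun z : α × β => f z.1 z.2) := hf
  have ham : Measurable a := by
    apply Measurable.pow_const
    exact Measurable.lintegral_prod_left' (f := fun z : α × β => f z.1 z.2 ^ p) (by fun_prop)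
  rcases eq_or_ne (∫⁻ y, a y ∂ν) ∞ with hR | hR
  · rw [hR]; exact le_top
  have hat : ∀ᵐ y ∂ν, a y < ∞ := ae_lt_top ham hR
  have key : ∀ᵐ y ∂ν, ∀ᵐ x ∂μ, a y < ∞ ∧ (a y = 0 → f x y = 0) := by
    filter_upwards [hat] with y hy
    by_cases h0 : a y = 0
    · have : ∫⁻ x, f x y ^ p ∂μ = 0 := by
        simp only [ha] at h0
        rw [ENNReal.rpow_eq_zero_iff_of_pos (by positivity)] at h0
        exact h0
      rw [lintegral_eq_zero_iff (by
        have : Measurable (fun x => f x y) := hfm.comp (measurable_id.prodMk measurable_const)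
        fun_prop)] at this
      filter_upwards [this] with x hx
      refine ⟨hy, fun _ => ?_⟩
      simpa [hp0, hp0.le, not_lt.2 hp0.le] using hx
    · exact Eventually.of_forall fun x => ⟨hy, fun h => absurd h h0⟩
  have key2 : ∀ᵐ x ∂μ, ∀ᵐ y ∂ν, a y < ∞ ∧ (a y = 0 → f x y = 0) := by
    rw [Measure.ae_ae_comm]
    · exact key
    · have : MeasurableSet {z : α × β | a z.2 < ∞ ∧ (a z.2 = 0 → f z.1 z.2 = 0)} := by
        have h1 : Measurable fun z : α × β => a z.2 := ham.comp measurable_snd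
        have : {z : α × β | a z.2 < ∞ ∧ (a z.2 = 0 → f z.1 z.2 = 0)} =
          {z | a z.2 < ∞} ∩ ({z | a z.2 = 0}ᶜ ∪ {z | f z.1 z.2 = 0}) := by
          ext z; simp [imp_iff_not_or]
        rw [this]
        exact (measurableSet_lt h1 measurable_const).inter
          ((h1 (measurableSet_singleton 0)).compl.union (hfm (measurableSet_singleton 0)))
      exact this
  have step : ∀ᵐ x ∂μ, (∫⁻ y, f x y ∂ν) ^ p ≤
      (∫⁻ y, a y ∂ν) ^ (p-1) * ∫⁻ y, a y * (f x y / a y) ^ p ∂ν := by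
    filter_upwards [key2] with x hx
    have hfx : Measurable (fun y => f x y) := hfm.comp (measurable_const.prodMk measurable_id)
    have := jensen_w ν hp a (fun y => f x y / a y) ham.aemeasurable
      (hfx.div ham).aemeasurable (hat.mono fun y hy => hy.ne)
    refine le_trans (le_of_eq ?_) this
    congr 1
    refine lintegral_congr_ae ?_
    filter_upwards [hx] with y hy
    by_cases h0 : a y = 0
    · simp [h0, hy.2 h0]
    · rw [ENNReal.mul_div_cancel h0 hy.1.ne]
  have main : ∫⁻ x, (∫⁻ y, f x y ∂ν) ^ p ∂μ ≤ (∫⁻ y, a y ∂ν) ^ p := by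
    calc _ ≤ ∫⁻ x, (∫⁻ y, a y ∂ν) ^ (p-1) * ∫⁻ y, a y * (f x y / a y) ^ p ∂ν ∂μ :=
          lintegral_mono_ae step
      _ = (∫⁻ y, a y ∂ν) ^ (p-1) * ∫⁻ x, ∫⁻ y, a y * (f x y / a y) ^ p ∂ν ∂μ := by
          rw [lintegral_const_mul']
          exact ENNReal.rpow_ne_top_of_nonneg (by linarith) hR
      _ = (∫⁻ y, a y ∂ν) ^ (p-1) * ∫⁻ y, ∫⁻ x, a y * (f x y / a y) ^ p ∂μ ∂ν := by
          rw [lintegral_lintegral_swap]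
          have h1 : Measurable fun z : α × β => a z.2 := ham.comp measurable_snd
          exact (h1.mul ((hfm.div h1).pow_const p)).aemeasurable
      _ ≤ (∫⁻ y, a y ∂ν) ^ (p-1) * ∫⁻ y, a y ∂ν := by
          gcongr 1
          refine lintegral_mono_ae ?_
          filter_upwards [hat] with y hy
          rw [lintegral_const_mul' _ _ hy.ne]
          by_cases h0 : a y = 0
          · simp [h0]
          have : ∀ x, (f x y / a y) ^ p = (a y)⁻¹ ^ p * f x y ^ p := by
            intro x
            rw [div_eq_mul_inv, mul_comm, ENNReal.mul_rpow_of_nonneg _ _ hp0.le]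
          simp only [this]
          rw [lintegral_const_mul' _ _ (ENNReal.rpow_ne_top_of_nonneg hp0.le
            (ENNReal.inv_ne_top.2 h0))]
          have h2 : ∫⁻ x, f x y ^ p ∂μ = a y ^ p := by
            simp only [ha]
            rw [← ENNReal.rpow_mul, one_div_mul_cancel hp0.ne', ENNReal.rpow_one]
          rw [h2, ← ENNReal.mul_rpow_of_nonneg _ _ hp0.le, ENNReal.inv_mul_cancel h0 hy.ne]
          simp
      _ = _ := by
          nth_rw 2 [← ENNReal.rpow_one (∫⁻ y, a y ∂ν)]
          rw [← ENNReal.rpow_add_of_nonneg _ _ (by linarith) (by norm_num)]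
          simp
  calc _ ≤ ((∫⁻ y, a y ∂ν) ^ p) ^ (1/p) := ENNReal.rpow_le_rpow main (by positivity)
    _ = _ := by
      rw [← ENNReal.rpow_mul, mul_one_div_cancel hp0.ne', ENNReal.rpow_one]

theorem lconv_sup {E : Type*} [NormedAddCommGroup E] [MeasurableSpace E] [BorelSpace E]
    [SecondCountableTopology E]
    (μ : Measure E) [μ.IsAddHaarMeasure] [μ.IsNegInvariant] [SFinite μ] {p : ℝ} (hp : 1 ≤ p) (K g : E → ℝ≥0∞)
    (hK : Measurable K) (hg : Measurable g) (M : ℝ≥0∞) (hM : ∀ x, K x ≤ M) (hMt : M ≠ ∞) (x : E) :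
    (∫⁻ y, K y * g (x - y) ∂μ) ^ p ≤ (∫⁻ y, K y ∂μ) ^ (p-1) * M * ∫⁻ y, g y ^ p ∂μ := by
  refine (jensen_w μ hp K (fun y => g (x - y)) hK.aemeasurable (by fun_prop)
    (Eventually.of_forall fun a => ((hM a).trans_lt hMt.lt_top).ne)).trans ?_
  rw [mul_assoc]
  gcongr 1
  calc _ ≤ ∫⁻ y, M * g (x - y) ^ p ∂μ := by gcongr; exact hM _
    _ = _ := by
      rw [lintegral_const_mul' _ _ hMt, lintegral_sub_left_eq_self (fun y => g y ^ p) x]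

theorem lconv_Lp {E : Type*} [NormedAddCommGroup E] [MeasurableSpace E] [BorelSpace E]
    [SecondCountableTopology E]
    (μ : Measure E) [μ.IsAddHaarMeasure] [μ.IsNegInvariant] [SFinite μ] {p : ℝ} (hp : 1 ≤ p) (K g : E → ℝ≥0∞)
    (hK : Measurable K) (hg : Measurable g) :
    (∫⁻ x, (∫⁻ y, K y * g (x - y) ∂μ) ^ p ∂μ) ^ (1/p) ≤
      (∫⁻ y, K y ∂μ) * (∫⁻ y, g y ^ p ∂μ) ^ (1/p) := by
  have hp0 : 0 < p := by linarith
  refine (minkowski_int μ μ hp (fun x y => K y * g (x - y)) (by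
    simp only [Function.uncurry_def]; fun_prop)).trans ?_
  rw [← lintegral_mul_const _ hK]
  refine lintegral_mono fun y => ?_
  simp only
  have : ∀ x, (K y * g (x - y)) ^ p = K y ^ p * g (x - y) ^ p := fun x =>
    ENNReal.mul_rpow_of_nonneg _ _ hp0.le
  simp only [this]
  rw [lintegral_const_mul _ (by fun_prop), lintegral_sub_right_eq_self (fun x => g x ^ p) y,
    ENNReal.mul_rpow_of_nonneg _ _ (by positivity), ← ENNReal.rpow_mul,
    mul_one_div_cancel hp0.ne', ENNReal.rpow_one]

theorem lconv_bern {E : Type*} [NormedAddCommGroup E] [MeasurableSpace E] [BorelSpace E]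
    [SecondCountableTopology E]
    (μ : Measure E) [μ.IsAddHaarMeasure] [μ.IsNegInvariant] [SFinite μ] {p₀ p₁ : ℝ} (hp : 1 ≤ p₀) (hpp : p₀ ≤ p₁)
    (K g : E → ℝ≥0∞)
    (hK : Measurable K) (hg : Measurable g) (M : ℝ≥0∞) (hM : ∀ x, K x ≤ M) (hMt : M ≠ ∞) :
    (∫⁻ x, (∫⁻ y, K y * g (x - y) ∂μ) ^ p₁ ∂μ) ^ (1/p₁) ≤
      (∫⁻ y, K y ∂μ) ^ ((1 - 1/p₀) * (1 - p₀/p₁) + p₀/p₁) * M ^ (1/p₀ - 1/p₁) *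
        (∫⁻ y, g y ^ p₀ ∂μ) ^ (1/p₀) := by
  have hp0 : 0 < p₀ := by linarith
  have hp1 : 0 < p₁ := by linarith
  set A := ∫⁻ y, K y ∂μ
  set G := ∫⁻ y, g y ^ p₀ ∂μ
  set h : E → ℝ≥0∞ := fun x => ∫⁻ y, K y * g (x - y) ∂μ with hh
  set S := (A ^ (p₀ - 1) * M * G) ^ (1/p₀) with hS
  have hsup : ∀ x, h x ≤ S := by
    intro x
    have := ENNReal.rpow_le_rpow (lconv_sup μ hp K g hK hg M hM hMt x)
      (show 0 ≤ 1/p₀ by positivity)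
    rwa [← ENNReal.rpow_mul, mul_one_div_cancel hp0.ne', ENNReal.rpow_one] at this
  have hLp : ∫⁻ x, h x ^ p₀ ∂μ ≤ A ^ p₀ * G := by
    have := ENNReal.rpow_le_rpow (lconv_Lp μ hp K g hK hg) hp0.le
    rwa [← ENNReal.rpow_mul, one_div_mul_cancel hp0.ne', ENNReal.rpow_one,
      ENNReal.mul_rpow_of_nonneg _ _ hp0.le, ← ENNReal.rpow_mul, one_div_mul_cancel hp0.ne',
      ENNReal.rpow_one] at this
  have hhm : Measurable h :=
    Measurable.lintegral_prod_right' (f := fun z : E × E => K z.2 * g (z.1 - z.2)) (by fun_prop)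
  have hx : 0 ≤ 1 - p₀/p₁ := by
    rw [sub_nonneg, div_le_one hp1]; exact hpp
  have hx' : 0 ≤ 1 - 1/p₀ := by
    rw [sub_nonneg, div_le_one hp0]; exact hp
  have h1 : ∫⁻ x, h x ^ p₁ ∂μ ≤ S ^ (p₁ - p₀) * (A ^ p₀ * G) := by
    calc _ ≤ ∫⁻ x, S ^ (p₁ - p₀) * h x ^ p₀ ∂μ := by
          refine lintegral_mono fun x => ?_
          have : h x ^ p₁ = h x ^ (p₁ - p₀) * h x ^ p₀ := by
            rw [← ENNReal.rpow_add_of_nonneg _ _ (by linarith) hp0.le]; simp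
          simp only [this]
          gcongr
          exact hsup x
      _ = S ^ (p₁ - p₀) * ∫⁻ x, h x ^ p₀ ∂μ := by
          rw [lintegral_const_mul _ (by fun_prop)]
      _ ≤ _ := by gcongr
  refine (ENNReal.rpow_le_rpow h1 (show 0 ≤ 1/p₁ by positivity)).trans (le_of_eq ?_)
  have i1 : 0 ≤ 1 / p₁ := by positivity
  have i0 : 0 ≤ 1 / p₀ := by positivity
  have j1 : (p₁ - p₀) * (1/p₁) = 1 - p₀/p₁ := by field_simp
  rw [ENNReal.mul_rpow_of_nonneg _ _ i1, ENNReal.mul_rpow_of_nonneg _ _ i1, ← ENNReal.rpow_mul,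
    ← ENNReal.rpow_mul, j1,
    ENNReal.mul_rpow_of_nonneg _ _ (by positivity), ENNReal.mul_rpow_of_nonneg _ _ (by positivity),
    ← ENNReal.rpow_mul, ← ENNReal.rpow_mul]
  have e1 : (p₀ - 1) * (1 / p₀ * (1 - p₀ / p₁)) = (1 - 1/p₀) * (1 - p₀/p₁) := by
    field_simp
  have e2 : 1 / p₀ * (1 - p₀ / p₁) = 1/p₀ - 1/p₁ := by field_simp
  have e3 : p₀ * (1/p₁) = p₀/p₁ := by ring
  rw [e1, e2, e3, ENNReal.rpow_add_of_nonneg _ _ (by positivity) (by positivity)]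
  have e4 : G ^ (1/p₀) = G ^ (1/p₀ - 1/p₁) * G ^ (1/p₁) := by
    rw [← ENNReal.rpow_add_of_nonneg _ _ (by rw [← e2]; positivity) i1]; simp
  rw [e4]
  ring

abbrev SC (n : ℕ) : Type := SchwartzMap (Rn n) ℂ

/-- complexification -/
def cx (f : SchwartzMap (Rn n) ℝ) : SC n := SchwartzMap.postcompCLM (𝕜 := ℝ) Complex.ofRealCLM f

theorem cx_apply (f : SchwartzMap (Rn n) ℝ) (x : Rn n) : cx f x = (f x : ℂ) := rfl

theorem ft_cx (f : SchwartzMap (Rn n) ℝ) (ξ : Rn n) : 𝓕 (cx f) ξ = ftC f ξ := rfl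

/-- dilation -/
def dil (l : ℝ) (f : SC n) : SC n :=
  if h : l = 0 then 0 else
    ((l : ℂ) ^ n) • SchwartzMap.compCLMOfContinuousLinearEquiv ℂ
      (ContinuousLinearEquiv.smulLeft (R₁ := ℝ) (M₁ := Rn n) (Units.mk0 l h)) f

theorem dil_apply {l : ℝ} (hl : l ≠ 0) (f : SC n) (x : Rn n) :
    dil l f x = (l : ℂ) ^ n * f (l • x) := by
  simp only [dil, dif_neg hl, _root_.smul_apply,
    SchwartzMap.compCLMOfContinuousLinearEquiv_apply, Function.comp, smul_eq_mul]
  rfl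

theorem ft_dil {l : ℝ} (hl : 0 < l) (f : SC n) (ξ : Rn n) :
    𝓕 (dil l f) ξ = 𝓕 f (l⁻¹ • ξ) := by
  rw [SchwartzMap.fourier_coe, SchwartzMap.fourier_coe, Real.fourier_eq, Real.fourier_eq]
  have h := MeasureTheory.Measure.integral_comp_smul (volume : Measure (Rn n))
    (fun v => Real.fourierChar (-inner ℝ v (l⁻¹ • ξ)) • f v) l
  have e : ∀ v : Rn n, Real.fourierChar (-inner ℝ v ξ) • dil l f v =
      (l : ℂ) ^ n * (Real.fourierChar (-inner ℝ (l • v) (l⁻¹ • ξ)) • f (l • v)) := by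
    intro v
    rw [dil_apply hl.ne', inner_smul_left, inner_smul_right]
    have : (starRingEnd ℝ) l * (l⁻¹ * inner ℝ v ξ) = inner ℝ v ξ := by
      simp; field_simp
    rw [this]
    simp only [Circle.smul_def, smul_eq_mul]; ring
  simp only [e]
  rw [integral_const_mul, h]
  have : Module.finrank ℝ (Rn n) = n := by simp
  rw [this, abs_of_pos (by positivity), Complex.real_smul, ← mul_assoc]
  have : (l : ℂ) ^ n * (((l ^ n)⁻¹ : ℝ) : ℂ) = 1 := by
    push_cast
    have : (l : ℂ) ≠ 0 := by exact_mod_cast hl.ne'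
    field_simp
  rw [this, one_mul]

/-- convolution -/
def cv (f g : SC n) : SC n := SchwartzMap.convolution (ContinuousLinearMap.mul ℂ ℂ) f g

theorem cv_apply (f g : SC n) (x : Rn n) : cv f g x = ∫ y, f y * g (x - y) := by
  rw [cv, SchwartzMap.convolution_apply, MeasureTheory.convolution_def]; rfl

theorem ft_cv (f g : SC n) (ξ : Rn n) : 𝓕 (cv f g) ξ = 𝓕 f ξ * 𝓕 g ξ := by
  rw [cv, SchwartzMap.fourier_convolution, SchwartzMap.pairing_apply_apply]; rfl

theorem ft_ext {f g : SC n} (h : ∀ ξ, 𝓕 f ξ = 𝓕 g ξ) : f = g := by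
  have : 𝓕 f = 𝓕 g := by ext ξ; exact h ξ
  have := congrArg 𝓕⁻ this
  simpa using this

theorem ft_add (f g : SC n) (ξ : Rn n) : 𝓕 (f + g) ξ = 𝓕 f ξ + 𝓕 g ξ := by
  rw [FourierTransform.fourier_add]; rfl

theorem ft_smul (c : ℂ) (g : SC n) (ξ : Rn n) : 𝓕 (c • g) ξ = c * 𝓕 g ξ := by
  rw [FourierTransform.fourier_smul]; rfl

/-- L1 norm -/
def n1 (f : SC n) : ℝ≥0∞ := ∫⁻ x, ‖f x‖ₑ

theorem n1_ne_top (f : SC n) : n1 f ≠ ∞ := (f.integrable (μ := volume)).2.ne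

theorem n1_dil {l : ℝ} (hl : 0 < l) (f : SC n) : n1 (dil l f) = n1 f := by
  unfold n1
  rw [← ofReal_integral_norm_eq_lintegral_enorm (f.integrable (μ := volume)),
   ← ofReal_integral_norm_eq_lintegral_enorm ((dil l f).integrable (μ := volume))]
  congr 1
  have h := MeasureTheory.Measure.integral_comp_smul (volume : Measure (Rn n))
    (fun v => ‖f v‖) l
  have : Module.finrank ℝ (Rn n) = n := by simp
  rw [this, abs_of_pos (by positivity), smul_eq_mul] at h
  simp only [dil_apply hl.ne', norm_mul]
  rw [integral_const_mul, h]
  simp [abs_of_pos hl]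
  field_simp

theorem enorm_cv_le (f g : SC n) (x : Rn n) : ‖cv f g x‖ₑ ≤ ∫⁻ y, ‖f y‖ₑ * ‖g (x - y)‖ₑ := by
  rw [cv_apply]
  refine (enorm_integral_le_lintegral_enorm _).trans ?_
  simp

theorem eLp_eq (p : ℝ≥0∞) (hp : 1 ≤ p) (hp' : p < ∞) {F : Type*} [NormedAddCommGroup F]
    (f : Rn n → F) :
    eLpNorm f p volume = (∫⁻ x, ‖f x‖ₑ ^ p.toReal) ^ (1 / p.toReal) :=
  eLpNorm_eq_lintegral_rpow_enorm_toReal (zero_lt_one.trans_le hp).ne' hp'.ne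

theorem cv_young (p : ℝ≥0∞) (hp : 1 ≤ p) (hp' : p < ∞) (f g : SC n) :
    eLpNorm (cv f g) p volume ≤ n1 f * eLpNorm g p volume := by
  rw [eLp_eq p hp hp', eLp_eq p hp hp']
  have hpr : 1 ≤ p.toReal := by
    rw [← ENNReal.toReal_one]; exact ENNReal.toReal_mono hp'.ne hp
  refine le_trans ?_ (lconv_Lp volume hpr (fun y => ‖f y‖ₑ) (fun y => ‖g y‖ₑ)
    f.continuous.enorm.measurable g.continuous.enorm.measurable)
  gcongr
  exact enorm_cv_le f g _

theorem toReal_one_le {p : ℝ≥0∞} (hp : 1 ≤ p) (hp' : p < ∞) : 1 ≤ p.toReal := by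
  rw [← ENNReal.toReal_one]; exact ENNReal.toReal_mono hp'.ne hp

theorem dil_bdd (f : SC n) : ∃ M : ℝ≥0∞, M ≠ ∞ ∧ ∀ l : ℝ, 0 < l → ∀ x,
    ‖dil l f x‖ₑ ≤ ENNReal.ofReal (l ^ n) * M := by
  refine ⟨ENNReal.ofReal (SchwartzMap.seminorm ℝ 0 0 f), ENNReal.ofReal_ne_top, fun l hl x => ?_⟩
  rw [dil_apply hl.ne', enorm_mul]
  gcongr
  · rw [← ofReal_norm]; simp [abs_of_pos hl]
  · rw [← ofReal_norm]
    exact ENNReal.ofReal_le_ofReal (SchwartzMap.norm_le_seminorm ℝ f _)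

theorem cv_bern (p₀ p₁ : ℝ≥0∞) (hp₀ : 1 ≤ p₀) (hp₀₁ : p₀ ≤ p₁) (hp₁ : p₁ < ∞) (f : SC n) :
    ∃ C : ℝ≥0∞, C ≠ ∞ ∧ ∀ l : ℝ, 0 < l → ∀ g : SC n,
      eLpNorm (cv (dil l f) g) p₁ volume ≤
        C * ENNReal.ofReal (l ^ ((n:ℝ) * (1/p₀.toReal - 1/p₁.toReal))) * eLpNorm g p₀ volume := by
  obtain ⟨M, hM, hMb⟩ := dil_bdd f
  have h0 := hp₀₁.trans_lt hp₁
  have h1 := hp₀.trans hp₀₁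
  have r0 := toReal_one_le hp₀ h0
  have r1 := toReal_one_le h1 hp₁
  have r01 : p₀.toReal ≤ p₁.toReal := ENNReal.toReal_mono hp₁.ne hp₀₁
  have hx : 0 ≤ 1 - p₀.toReal/p₁.toReal := by
    rw [sub_nonneg, div_le_one (by linarith)]; exact r01
  have hx' : 0 ≤ 1 - 1/p₀.toReal := by
    rw [sub_nonneg, div_le_one (by linarith)]; exact r0
  have hd : 0 ≤ 1/p₀.toReal - 1/p₁.toReal := by
    rw [sub_nonneg]; exact one_div_le_one_div_of_le (by linarith) r01
  set θ := (1 - 1/p₀.toReal) * (1 - p₀.toReal/p₁.toReal) + p₀.toReal/p₁.toReal with hθ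
  have hθ0 : 0 ≤ θ := by positivity
  refine ⟨n1 f ^ θ * M ^ (1/p₀.toReal - 1/p₁.toReal), ?_, fun l hl g => ?_⟩
  · exact ENNReal.mul_ne_top (ENNReal.rpow_ne_top_of_nonneg hθ0 (n1_ne_top f))
      (ENNReal.rpow_ne_top_of_nonneg hd hM)
  rw [eLp_eq p₀ hp₀ h0, eLp_eq p₁ h1 hp₁]
  have key := lconv_bern (volume : Measure (Rn n)) r0 r01 (fun y => ‖dil l f y‖ₑ) (fun y => ‖g y‖ₑ)
    (dil l f).continuous.enorm.measurable g.continuous.enorm.measurable _ (hMb l hl)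
    (ENNReal.mul_ne_top ENNReal.ofReal_ne_top hM)
  refine le_trans ?_ (key.trans (le_of_eq ?_))
  · gcongr
    exact enorm_cv_le _ g _
  · have : ∫⁻ y, ‖dil l f y‖ₑ = n1 f := n1_dil hl f
    rw [this, ← hθ, ENNReal.mul_rpow_of_nonneg _ _ hd,
      ENNReal.ofReal_rpow_of_pos (by positivity), ← Real.rpow_natCast, ← Real.rpow_mul hl.le]
    ring

theorem cv_sup (p₀ : ℝ≥0∞) (hp₀ : 1 ≤ p₀) (h0 : p₀ < ∞) (f : SC n) :
    ∃ C : ℝ≥0∞, C ≠ ∞ ∧ ∀ g : SC n, ∀ x, 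
      ∫⁻ y, ‖f y‖ₑ * ‖g (x - y)‖ₑ ≤ C * eLpNorm g p₀ volume := by
  obtain ⟨M, hM, hMb⟩ := dil_bdd f
  have r0 := toReal_one_le hp₀ h0
  have hb : ∀ x, ‖f x‖ₑ ≤ M := by
    intro x
    simpa [dil_apply] using hMb 1 one_pos x
  refine ⟨(n1 f ^ (p₀.toReal - 1) * M) ^ (1/p₀.toReal), ?_, fun g x => ?_⟩
  · exact ENNReal.rpow_ne_top_of_nonneg (by positivity) (ENNReal.mul_ne_top
      (ENNReal.rpow_ne_top_of_nonneg (by linarith) (n1_ne_top f)) hM)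
  have key := lconv_sup (volume : Measure (Rn n)) r0 (fun y => ‖f y‖ₑ) (fun y => ‖g y‖ₑ)
    f.continuous.enorm.measurable g.continuous.enorm.measurable M hb hM x
  have := ENNReal.rpow_le_rpow key (show 0 ≤ 1/p₀.toReal by positivity)
  rw [← ENNReal.rpow_mul, mul_one_div_cancel (by linarith), ENNReal.rpow_one,
    ENNReal.mul_rpow_of_nonneg _ _ (by positivity)] at this
  rw [eLp_eq p₀ hp₀ h0]
  exact this

theorem gauss_decay (k : ℕ) : ∃ C : ℝ, 0 ≤ C ∧ ∀ r : ℝ, 0 ≤ r → (1 + r)^k * Real.exp (-r^2/4) ≤ C := by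
  refine ⟨k.factorial * Real.exp 3, by positivity, fun r hr => ?_⟩
  have h := Real.pow_div_factorial_le_exp (1 + r) (by linarith) k
  rw [div_le_iff₀ (by positivity)] at h
  calc (1 + r)^k * Real.exp (-r^2/4) ≤ (Real.exp (1 + r) * k.factorial) * Real.exp (-r^2/4) := by
        gcongr
    _ = k.factorial * Real.exp (1 + r + -r^2/4) := by rw [Real.exp_add (1 + r)]; ring
    _ ≤ _ := by
      gcongr
      nlinarith [sq_nonneg (r/2 - 1)]

theorem gauss_schwartz (k m : ℕ) : ∃ C : ℝ, ∀ x : Rn n,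
    ‖x‖ ^ k * ‖iteratedFDeriv ℝ m (fun x : Rn n => Real.exp (-‖x‖^2/4)) x‖ ≤ C := by
  have ht : Function.HasTemperateGrowth (fun x : Rn n => -‖x‖^2/4) := by
    have : (fun x : Rn n => -‖x‖^2/4) = fun x : Rn n => (-1/4 : ℝ) * ‖x‖^2 := by
      ext x; ring
    rw [this]; fun_prop
  obtain ⟨a, C, hC, hb⟩ := ht.norm_iteratedFDeriv_le_uniform m
  obtain ⟨D, hD, hdec⟩ := gauss_decay (k + a * m)
  refine ⟨m.factorial * (C + 1)^m * D, fun x => ?_⟩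
  have h := norm_iteratedFDeriv_comp_le (n := m) (N := (⊤ : ℕ∞)) Real.contDiff_exp ht.1
    (by exact_mod_cast le_top) x (C := Real.exp (-‖x‖^2/4)) (D := (C + 1) * (1 + ‖x‖)^a)
    (fun i hi => by
      rw [norm_iteratedFDeriv_eq_norm_iteratedDeriv, iteratedDeriv_eq_iterate, Real.iter_deriv_exp]
      simp)
    (fun i hi hi' => by
      refine (hb i hi' x).trans ?_
      have h1 : 1 ≤ (C + 1) * (1 + ‖x‖)^a := by
        have : 1 ≤ (1 + ‖x‖)^a := one_le_pow₀ (by linarith [norm_nonneg x])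
        nlinarith
      calc C * (1 + ‖x‖)^a ≤ (C+1) * (1 + ‖x‖)^a := by gcongr; linarith
        _ ≤ _ := le_self_pow₀ h1 (by omega))
  have h' : ‖iteratedFDeriv ℝ m (fun x : Rn n => Real.exp (-‖x‖^2/4)) x‖ ≤ _ := h
  calc _ ≤ (1 + ‖x‖)^k * (m.factorial * Real.exp (-‖x‖^2/4) * ((C + 1) * (1 + ‖x‖)^a)^m) := by
        gcongr
        linarith
    _ = m.factorial * (C + 1)^m * ((1 + ‖x‖)^(k + a*m) * Real.exp (-‖x‖^2/4)) := by
        rw [mul_pow, pow_add, pow_mul]; ring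
    _ ≤ _ := by gcongr; exact hdec _ (norm_nonneg x)

def gaussR (n : ℕ) : SchwartzMap (Rn n) ℝ where
  toFun x := Real.exp (-‖x‖^2/4)
  smooth' := Real.contDiff_exp.comp (((contDiff_norm_sq ℝ).neg).div_const _)
  decay' := gauss_schwartz

/-- the heat kernel at time one -/
def gauss (n : ℕ) : SC n := (((4 * π) ^ (-(n:ℝ)/2) : ℝ) : ℂ) • cx (gaussR n)

theorem gauss_apply (x : Rn n) :
    gauss n x = (((4 * π) ^ (-(n:ℝ)/2) * Real.exp (-‖x‖^2/4) : ℝ) : ℂ) := by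
  rw [gauss, _root_.smul_apply, cx_apply, Complex.ofReal_mul]; rfl

theorem ft_gauss (ξ : Rn n) : 𝓕 (gauss n) ξ = Complex.exp (-(4 * π^2 * ‖ξ‖^2 : ℝ)) := by
  rw [gauss, ft_smul, SchwartzMap.fourier_coe]
  have : (⇑(cx (gaussR n))) = fun v : Rn n => Complex.exp (-(1/4 : ℂ) * (‖v‖:ℂ)^2) := by
    ext v
    rw [cx_apply]
    change ((Real.exp (-‖v‖^2/4) : ℝ) : ℂ) = _
    push_cast; congr 1; ring
  rw [this, fourier_gaussian_innerProductSpace (by norm_num), ← mul_assoc]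
  have h2 : ((π : ℂ) / (1/4)) ^ ((Module.finrank ℝ (Rn n) : ℂ)/2) = (((4 * π) ^ ((n:ℝ)/2) : ℝ) : ℂ) := by
    rw [Complex.ofReal_cpow (by positivity)]
    congr 1
    · push_cast; ring
    · simp
  rw [h2, ← Complex.ofReal_mul, ← Real.rpow_add (by positivity)]
  have : -(n:ℝ)/2 + n/2 = 0 := by ring
  rw [this]
  simp only [rpow_zero, Complex.ofReal_one, one_mul]
  congr 1; push_cast; ring

section LP
variable {ψ₀ Ψ : SchwartzMap (Rn n) ℝ} (hψ : IsLPF n ψ₀) (hΨ : IsLowPiece ψ₀ Ψ)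

theorem ph_zero_of (hψ : IsLPF n ψ₀) {ξ : Rn n} (h : ‖ξ‖ ≤ 1/2 ∨ 2 ≤ ‖ξ‖) : ftC ψ₀ ξ = 0 := by
  by_contra h0
  have := hψ.ft_supp ξ h0
  rcases h with h | h <;> linarith

theorem norm_zpow_smul (j : ℤ) (ξ : Rn n) : ‖(2:ℝ)^j • ξ‖ = (2:ℝ)^j * ‖ξ‖ := by
  rw [norm_smul, Real.norm_of_nonneg (by positivity)]

theorem low_one (hψ : IsLPF n ψ₀) (hΨ : IsLowPiece ψ₀ Ψ) {ξ : Rn n} (h : ‖ξ‖ ≤ 1/2) :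
    ftC Ψ ξ = 1 := by
  rw [hΨ ξ]
  have : ∀ k : ℕ, ftC ψ₀ ((2:ℝ) ^ (-(k:ℤ)) • ξ) = 0 := by
    intro k
    refine ph_zero_of hψ (Or.inl ?_)
    rw [norm_zpow_smul]
    have : (2:ℝ) ^ (-(k:ℤ)) ≤ 1 := zpow_le_one_of_nonpos₀ (by norm_num) (by simp)
    nlinarith [norm_nonneg ξ]
  simp only [this, tsum_zero, sub_zero]

theorem ph_summable (hψ : IsLPF n ψ₀) (ξ : Rn n) :
    Summable (fun k : ℕ => ftC ψ₀ ((2:ℝ) ^ (-(k:ℤ)) • ξ)) := by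
  by_cases h : ξ = 0
  · subst h
    have : ftC ψ₀ (0 : Rn n) = 0 := ph_zero_of hψ (by simp)
    simp [this, summable_zero]
  · exact (hψ.ft_sum ξ h).summable.comp_injective (i := fun k : ℕ => (k : ℤ)) Nat.cast_injective

theorem low_zero (hψ : IsLPF n ψ₀) (hΨ : IsLowPiece ψ₀ Ψ) {ξ : Rn n} (h : 1 ≤ ‖ξ‖) :
    ftC Ψ ξ = 0 := by
  rw [hΨ ξ, sub_eq_zero]
  have h0 : ξ ≠ 0 := by intro h0; rw [h0, norm_zero] at h; linarith
  have hs := hψ.ft_sum ξ h0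
  have hz : ∀ j : ℤ, j ∉ Set.range (fun k : ℕ => (k:ℤ)) → ftC ψ₀ ((2:ℝ) ^ (-j) • ξ) = 0 := by
    intro j hj
    have hj' : j < 0 := by
      by_contra hn
      exact hj ⟨j.toNat, by simp; omega⟩
    refine ph_zero_of hψ (Or.inr ?_)
    rw [norm_zpow_smul]
    have : (2:ℝ)^(1:ℤ) ≤ (2:ℝ) ^ (-j) := zpow_le_zpow_right₀ (by norm_num) (by omega)
    rw [zpow_one] at this
    nlinarith
  have := (Function.Injective.hasSum_iff (g := fun k : ℕ => (k:ℤ)) Nat.cast_injective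
    (fun x hx => hz x hx)).2 hs
  exact this.tsum_eq.symm

theorem ph_eq (hψ : IsLPF n ψ₀) (hΨ : IsLowPiece ψ₀ Ψ) (ξ : Rn n) :
    ftC ψ₀ ξ = ftC Ψ ((2:ℝ)⁻¹ • ξ) - ftC Ψ ξ := by
  rw [hΨ ξ, hΨ, (ph_summable hψ ξ).tsum_eq_zero_add]
  have : ∀ k : ℕ, (2:ℝ) ^ (-(k:ℤ)) • (2:ℝ)⁻¹ • ξ = (2:ℝ) ^ (-((k+1 : ℕ):ℤ)) • ξ := by
    intro k
    rw [smul_smul]; congr 1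
    rw [← zpow_neg_one, ← zpow_add₀ (by norm_num)]; congr 1; push_cast; ring
  simp only [this, Nat.cast_zero, neg_zero, zpow_zero, one_smul]
  ring

/-- kernels of the decomposition -/
def Q (ψ₀ Ψ : SchwartzMap (Rn n) ℝ) : ℕ → SC n
  | 0 => cx Ψ
  | j + 1 => dil ((2:ℝ)^j) (cx ψ₀)

theorem ft_Q_succ (ψ₀ Ψ : SchwartzMap (Rn n) ℝ) (j : ℕ) (ξ : Rn n) :
    𝓕 (Q ψ₀ Ψ (j+1)) ξ = ftC ψ₀ (((2:ℝ)^j)⁻¹ • ξ) := by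
  rw [Q, ft_dil (by positivity), ft_cx]

theorem ft_Q_zero (ψ₀ Ψ : SchwartzMap (Rn n) ℝ) (ξ : Rn n) :
    𝓕 (Q ψ₀ Ψ 0) ξ = ftC Ψ ξ := rfl

theorem ft_Q_sum (hψ : IsLPF n ψ₀) (hΨ : IsLowPiece ψ₀ Ψ) (j : ℕ) (ξ : Rn n) :
    ∑ i ∈ Finset.range (j+1), 𝓕 (Q ψ₀ Ψ i) ξ = ftC Ψ (((2:ℝ)^j)⁻¹ • ξ) := by
  induction j with
  | zero => simp [ft_Q_zero]
  | succ j ih =>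
    rw [Finset.sum_range_succ, ih, ft_Q_succ, ph_eq hψ hΨ, smul_smul]
    have : (2:ℝ)⁻¹ * (2^j)⁻¹ = (2^(j+1))⁻¹ := by rw [pow_succ, mul_inv, mul_comm]
    rw [this]; ring

theorem ft_Q_three (hψ : IsLPF n ψ₀) (hΨ : IsLowPiece ψ₀ Ψ) (j : ℕ) (ξ : Rn n)
    (h : ftC ψ₀ (((2:ℝ)^j)⁻¹ • ξ) ≠ 0) :
    𝓕 (Q ψ₀ Ψ j) ξ + 𝓕 (Q ψ₀ Ψ (j+1)) ξ + 𝓕 (Q ψ₀ Ψ (j+2)) ξ = 1 := by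
  have hs := hψ.ft_supp _ h
  rw [norm_smul, Real.norm_of_nonneg (by positivity)] at hs
  have h1 : ∑ i ∈ Finset.range (j+2+1), 𝓕 (Q ψ₀ Ψ i) ξ = 1 := by
    rw [ft_Q_sum hψ hΨ]
    refine low_one hψ hΨ ?_
    rw [norm_smul, Real.norm_of_nonneg (by positivity), pow_add, mul_inv]
    norm_num; linarith [hs.2]
  have h2 : ∑ i ∈ Finset.range j, 𝓕 (Q ψ₀ Ψ i) ξ = 0 := by
    cases j with
    | zero => simp
    | succ j =>
      rw [ft_Q_sum hψ hΨ]
      refine low_zero hψ hΨ ?_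
      rw [norm_smul, Real.norm_of_nonneg (by positivity)]
      rw [pow_succ, mul_inv] at hs
      norm_num at hs ⊢; linarith [hs.1]
  rw [Finset.sum_range_succ, Finset.sum_range_succ, Finset.sum_range_succ, h2] at h1
  linear_combination h1

/-- heat kernel -/
def hk (n : ℕ) (τ : ℝ) : SC n := dil ((√τ)⁻¹) (gauss n)

theorem hk_apply {τ : ℝ} (hτ : 0 < τ) (x : Rn n) :
    hk n τ x = (((4 * π * τ) ^ (-(n:ℝ)/2) * Real.exp (-‖x‖^2 / (4*τ)) : ℝ) : ℂ) := by
  have hs : 0 < √τ := Real.sqrt_pos.2 hτ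
  rw [hk, dil_apply (by positivity), gauss_apply, ← Complex.ofReal_pow, ← Complex.ofReal_mul]
  congr 1
  rw [norm_smul, Real.norm_of_nonneg (by positivity), Real.mul_rpow (by positivity) hτ.le, mul_pow,
    inv_pow (√τ) 2, Real.sq_sqrt hτ.le, ← mul_assoc]
  congr 1
  · rw [mul_comm]; congr 1
    rw [neg_div, Real.rpow_neg hτ.le, inv_pow, Real.sqrt_eq_rpow, ← Real.rpow_natCast,
      ← Real.rpow_mul hτ.le]
    congr 2; ring
  · congr 1; field_simp

theorem ft_hk {τ : ℝ} (hτ : 0 < τ) (ξ : Rn n) :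
    𝓕 (hk n τ) ξ = Complex.exp (-(4 * π^2 * (τ * ‖ξ‖^2) : ℝ)) := by
  have hs : 0 < √τ := Real.sqrt_pos.2 hτ
  rw [hk, ft_dil (by positivity), ft_gauss, inv_inv, norm_smul, Real.norm_of_nonneg hs.le, mul_pow,
    Real.sq_sqrt hτ.le]

theorem n1_hk {τ : ℝ} (hτ : 0 < τ) : n1 (hk n τ) = n1 (gauss n) := by
  have hs : 0 < √τ := Real.sqrt_pos.2 hτ
  exact n1_dil (by positivity) _

/-- the function with Fourier transform `‖ξ‖² exp(-4π²‖ξ‖²)` -/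
def GG (n : ℕ) : SC n := 𝓕⁻ (SchwartzMap.smulLeftCLM ℂ (fun ξ : Rn n => ((‖ξ‖^2 : ℝ) : ℂ)) (𝓕 (gauss n)))

theorem ft_GG (ξ : Rn n) : 𝓕 (GG n) ξ = ((‖ξ‖^2 : ℝ) : ℂ) * Complex.exp (-(4 * π^2 * ‖ξ‖^2 : ℝ)) := by
  rw [GG, FourierTransform.fourier_fourierInv_eq, SchwartzMap.smulLeftCLM_apply_apply, ft_gauss]
  · rfl
  · fun_prop

theorem exists_phi (hψ : IsLPF n ψ₀) : ∃ φ : SC n, ∀ ξ, 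
    𝓕 φ ξ * ((‖ξ‖^2 : ℝ) : ℂ) = ftC ψ₀ ξ := by
  set f : Rn n → ℂ := fun ξ => 𝓕 (cx ψ₀) ξ / ((‖ξ‖^2 : ℝ) : ℂ) with hf
  have hc : HasCompactSupport f := by
    refine HasCompactSupport.intro (isCompact_closedBall (0 : Rn n) 2) fun x hx => ?_
    simp only [Metric.mem_closedBall, dist_zero_right, not_le] at hx
    simp only [hf, ft_cx, ph_zero_of hψ (Or.inr hx.le), zero_div]
  have hd : ContDiff ℝ (⊤ : ℕ∞) f := by
    rw [contDiff_iff_contDiffAt]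
    intro ξ
    by_cases h : ‖ξ‖ < 1/2
    · have : f =ᶠ[nhds ξ] fun _ => 0 := by
        have ho : IsOpen {x : Rn n | ‖x‖ < 1/2} := isOpen_lt continuous_norm continuous_const
        filter_upwards [ho.mem_nhds h] with x hx
        simp only [hf, ft_cx, ph_zero_of hψ (Or.inl (le_of_lt hx)), zero_div]
      exact contDiffAt_const.congr_of_eventuallyEq this
    · have hne : ξ ≠ 0 := by rintro rfl; simp at h
      have h2 : ContDiffAt ℝ (⊤ : ℕ∞) (fun ξ : Rn n => ((‖ξ‖^2 : ℝ) : ℂ)) ξ :=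
        (Complex.ofRealCLM.contDiff.comp (contDiff_norm_sq ℝ)).contDiffAt
      have h3 : ContDiffAt ℝ (⊤ : ℕ∞) (fun ξ : Rn n => 𝓕 (cx ψ₀) ξ) ξ :=
        ((𝓕 (cx ψ₀)).smooth _).contDiffAt
      have h4 := h3.mul (h2.inv (by simpa using hne))
      have h5 : f = (fun ξ : Rn n => 𝓕 (cx ψ₀) ξ * (((‖ξ‖^2 : ℝ) : ℂ))⁻¹) := by
        ext x; simp only [hf, div_eq_mul_inv]
      rw [h5]
      exact h4
  refine ⟨𝓕⁻ (hc.toSchwartzMap hd), fun ξ => ?_⟩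
  rw [FourierTransform.fourier_fourierInv_eq, HasCompactSupport.toSchwartzMap_toFun]
  simp only [hf, ft_cx]
  by_cases h : ξ = 0
  · subst h
    rw [ph_zero_of hψ (by simp)]; simp
  · rw [div_mul_cancel₀]; simpa using h

end LP

section bridge

theorem bridge (K f : Rn n → ℝ) (Kc g : SC n) (hK : ∀ x, (K x : ℂ) = Kc x)
    (hf : ∀ x, (f x : ℂ) = g x) (x : Rn n) :
    ((MeasureTheory.convolution K f (ContinuousLinearMap.mul ℝ ℝ) volume x : ℝ) : ℂ)
      = cv Kc g x := by
  rw [cv_apply, MeasureTheory.convolution_def]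
  rw [← integral_complex_ofReal]
  simp only [ContinuousLinearMap.mul_apply', Complex.ofReal_mul, hK, hf]

theorem eLp_bridge (f : Rn n → ℝ) (g : SC n) (hf : ∀ x, (f x : ℂ) = g x) (p : ℝ≥0∞) :
    eLpNorm f p volume = eLpNorm g p volume := by
  refine eLpNorm_congr_norm_ae (Eventually.of_forall fun x => ?_)
  rw [← hf, Complex.norm_real]

theorem lpKernel_cx (ψ₀ : SchwartzMap (Rn n) ℝ) (j : ℕ) (x : Rn n) :
    ((lpKernel ψ₀ (j:ℤ) x : ℝ) : ℂ) = dil ((2:ℝ)^j) (cx ψ₀) x := by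
  rw [dil_apply (by positivity), cx_apply, lpKernel, Complex.ofReal_mul]
  congr 1
  · push_cast
    rw [zpow_mul]
    norm_cast

theorem lpProj_cx (ψ₀ : SchwartzMap (Rn n) ℝ) (j : ℕ) (f : Rn n → ℝ) (g : SC n)
    (hf : ∀ x, (f x : ℂ) = g x) (x : Rn n) :
    ((lpProj ψ₀ (j:ℤ) f x : ℝ) : ℂ) = cv (dil ((2:ℝ)^j) (cx ψ₀)) g x :=
  bridge _ _ _ _ (lpKernel_cx ψ₀ j) hf x

theorem heatOp_cx {τ : ℝ} (hτ : 0 < τ) (f : Rn n → ℝ) (g : SC n)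
    (hf : ∀ x, (f x : ℂ) = g x) (x : Rn n) :
    ((heatOp n τ f x : ℝ) : ℂ) = cv (hk n τ) g x :=
  bridge _ _ _ _ (fun x => (hk_apply hτ x).symm) hf x

theorem besov_cx (ψ₀ Ψ : SchwartzMap (Rn n) ℝ) (s : ℝ) (p q : ℝ≥0∞) (hq : q < ∞) (f : Rn n → ℝ)
    (g : SC n) (hf : ∀ x, (f x : ℂ) = g x) :
    besovNorm ψ₀ Ψ s p q f = eLpNorm (cv (Q ψ₀ Ψ 0) g) p volume +
      (∑' j : ℕ, (ENNReal.ofReal ((2:ℝ) ^ ((j:ℝ) * s)) *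
        eLpNorm (cv (Q ψ₀ Ψ (j+1)) g) p volume) ^ q.toReal) ^ (1 / q.toReal) := by
  rw [besovNorm, if_neg hq.ne]
  congr 1
  · exact eLp_bridge _ _ (fun x => bridge _ _ _ _ (fun x => rfl) hf x) p
  · congr 2
    ext j
    rw [eLp_bridge _ _ (fun x => lpProj_cx ψ₀ j f g hf x) p]
    rfl
end bridge

section ST
variable {ψ₀ Ψ : SchwartzMap (Rn n) ℝ}

theorem low_id (hψ : IsLPF n ψ₀) (hΨ : IsLowPiece ψ₀ Ψ) (K U : SC n) :
    cv (Q ψ₀ Ψ 0) (cv K U) = cv K (cv (Q ψ₀ Ψ 0) (cv (Q ψ₀ Ψ 0) U + cv (Q ψ₀ Ψ 1) U)) := by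
  refine ft_ext fun ξ => ?_
  simp only [ft_cv, ft_add]
  have h1 : 𝓕 (Q ψ₀ Ψ 0) ξ * (𝓕 (Q ψ₀ Ψ 0) ξ + 𝓕 (Q ψ₀ Ψ 1) ξ) = 𝓕 (Q ψ₀ Ψ 0) ξ := by
    by_cases h : 1 ≤ ‖ξ‖
    · rw [ft_Q_zero, low_zero hψ hΨ h]; simp
    · have := ft_Q_sum hψ hΨ 1 ξ
      rw [Finset.sum_range_succ, Finset.sum_range_one] at this
      rw [this, low_one hψ hΨ, mul_one]
      rw [norm_smul, Real.norm_of_nonneg (by positivity)]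
      push Not at h
      norm_num
      linarith
  linear_combination (-(𝓕 K ξ * 𝓕 U ξ)) * h1

/-- three neighbouring blocks -/
def W (ψ₀ Ψ : SchwartzMap (Rn n) ℝ) (U : SC n) (j : ℕ) : SC n :=
  cv (Q ψ₀ Ψ j) U + cv (Q ψ₀ Ψ (j+1)) U + cv (Q ψ₀ Ψ (j+2)) U

theorem ft_W (hψ : IsLPF n ψ₀) (hΨ : IsLowPiece ψ₀ Ψ) (U : SC n) (j : ℕ) (ξ : Rn n) :
    ftC ψ₀ (((2:ℝ)^j)⁻¹ • ξ) * 𝓕 (W ψ₀ Ψ U j) ξ = ftC ψ₀ (((2:ℝ)^j)⁻¹ • ξ) * 𝓕 U ξ := by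
  by_cases h : ftC ψ₀ (((2:ℝ)^j)⁻¹ • ξ) = 0
  · rw [h]; simp
  · have := ft_Q_three hψ hΨ j ξ h
    simp only [W, ft_add, ft_cv]
    linear_combination (ftC ψ₀ (((2:ℝ)^j)⁻¹ • ξ) * 𝓕 U ξ) * this

theorem high_id1 (hψ : IsLPF n ψ₀) (hΨ : IsLowPiece ψ₀ Ψ) (K U : SC n) (j : ℕ) :
    cv (Q ψ₀ Ψ (j+1)) (cv K U) = cv K (cv (dil ((2:ℝ)^j) (cx ψ₀)) (W ψ₀ Ψ U j)) := by
  refine ft_ext fun ξ => ?_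
  have := ft_W hψ hΨ U j ξ
  simp only [ft_cv, ft_Q_succ]
  rw [ft_dil (by positivity), ft_cx]
  linear_combination (-𝓕 K ξ) * this

theorem high_id2 (hψ : IsLPF n ψ₀) (hΨ : IsLowPiece ψ₀ Ψ) {φ : SC n}
    (hφ : ∀ ξ, 𝓕 φ ξ * ((‖ξ‖^2 : ℝ) : ℂ) = ftC ψ₀ ξ) {τ : ℝ} (hτ : 0 < τ) (U : SC n) (j : ℕ) :
    cv (Q ψ₀ Ψ (j+1)) (cv (hk n τ) U) =
      (((((2:ℝ)^j)^2 * τ)⁻¹ : ℝ) : ℂ) • cv (dil ((√τ)⁻¹) (GG n)) (cv (dil ((2:ℝ)^j) φ) (W ψ₀ Ψ U j)) := by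
  refine ft_ext fun ξ => ?_
  have h1 := ft_W hψ hΨ U j ξ
  have hs : 0 < √τ := Real.sqrt_pos.2 hτ
  have h2 := hφ (((2:ℝ)^j)⁻¹ • ξ)
  rw [ft_smul]
  simp only [ft_cv, ft_Q_succ]
  rw [ft_dil (by positivity), ft_dil (by positivity), ft_GG, ft_hk hτ, inv_inv]
  rw [norm_smul (√τ), Real.norm_of_nonneg hs.le, mul_pow, Real.sq_sqrt hτ.le]
  rw [norm_smul, Real.norm_of_nonneg (by positivity), mul_pow] at h2
  rw [← h2] at h1 ⊢
  have hj : ((2:ℂ)^j) ≠ 0 := pow_ne_zero _ two_ne_zero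
  have hτ' : (τ : ℂ) ≠ 0 := by exact_mod_cast hτ.ne'
  set E := Complex.exp (-(4 * π^2 * (τ * ‖ξ‖^2) : ℝ))
  have e : (((((2:ℝ)^j)^2 * τ)⁻¹ : ℝ) : ℂ) * ((τ * ‖ξ‖^2 : ℝ) : ℂ) = (((((2:ℝ)^j)⁻¹)^2 * ‖ξ‖^2 : ℝ) : ℂ) := by
    push_cast
    field_simp
  linear_combination (-E) * h1 - (E * 𝓕 φ (((2:ℝ)^j)⁻¹ • ξ) * 𝓕 (W ψ₀ Ψ U j) ξ) * e

theorem min_pow {a b : ℝ} (ha : 0 < a) (hb0 : 0 ≤ b) (hb : b ≤ 1) : min 1 (a⁻¹) ≤ a^(-b) := by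
  by_cases h : a ≤ 1
  · exact (min_le_left _ _).trans (Real.one_le_rpow_of_pos_of_le_one_of_nonpos ha h (by linarith))
  · push Not at h
    refine (min_le_right _ _).trans ?_
    rw [← Real.rpow_neg_one]
    exact Real.rpow_le_rpow_of_exponent_le h.le (by linarith)

theorem high_bd (hψ : IsLPF n ψ₀) (hΨ : IsLowPiece ψ₀ Ψ)
    (p₀ p₁ : ℝ≥0∞) (hp₀ : 1 ≤ p₀) (hp₀₁ : p₀ ≤ p₁) (hp₁ : p₁ < ∞) {b : ℝ} (hb0 : 0 ≤ b) (hb : b ≤ 1) :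
    ∃ C : ℝ≥0∞, C ≠ ∞ ∧ ∀ (τ : ℝ), 0 < τ → ∀ (U : SC n) (j : ℕ),
      eLpNorm (cv (Q ψ₀ Ψ (j+1)) (cv (hk n τ) U)) p₁ volume ≤
        C * ENNReal.ofReal (((2:ℝ)^j)^((n:ℝ) * (1/p₀.toReal - 1/p₁.toReal)) * (((2:ℝ)^j)^2*τ)^(-b)) *
          eLpNorm (W ψ₀ Ψ U j) p₀ volume := by
  obtain ⟨φ, hφ⟩ := exists_phi hψ
  obtain ⟨C1, hC1, h1⟩ := cv_bern p₀ p₁ hp₀ hp₀₁ hp₁ (cx ψ₀)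
  obtain ⟨C2, hC2, h2⟩ := cv_bern p₀ p₁ hp₀ hp₀₁ hp₁ φ
  have hp1 : 1 ≤ p₁ := hp₀.trans hp₀₁
  set d := (n:ℝ) * (1/p₀.toReal - 1/p₁.toReal)
  refine ⟨n1 (gauss n) * C1 + n1 (GG n) * C2, ?_, fun τ hτ U j => ?_⟩
  · exact ENNReal.add_ne_top.2 ⟨ENNReal.mul_ne_top (n1_ne_top _) hC1, ENNReal.mul_ne_top (n1_ne_top _) hC2⟩
  set w := eLpNorm (W ψ₀ Ψ U j) p₀ volume
  have hs : 0 < √τ := Real.sqrt_pos.2 hτ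
  set a := ((2:ℝ)^j)^2*τ with ha
  have ha0 : 0 < a := by positivity
  have k1 : eLpNorm (cv (Q ψ₀ Ψ (j+1)) (cv (hk n τ) U)) p₁ volume ≤
      (n1 (gauss n) * C1 + n1 (GG n) * C2) * ENNReal.ofReal (((2:ℝ)^j)^d * 1) * w := by
    rw [high_id1 hψ hΨ]
    refine (cv_young p₁ hp1 hp₁ _ _).trans ?_
    rw [n1_hk hτ, mul_one]
    calc _ ≤ n1 (gauss n) * (C1 * ENNReal.ofReal (((2:ℝ)^j)^d) * w) := by
            gcongr; exact h1 _ (by positivity) _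
      _ = (n1 (gauss n) * C1 + 0) * ENNReal.ofReal (((2:ℝ)^j)^d) * w := by ring
      _ ≤ _ := by gcongr; simp
  have k2 : eLpNorm (cv (Q ψ₀ Ψ (j+1)) (cv (hk n τ) U)) p₁ volume ≤
      (n1 (gauss n) * C1 + n1 (GG n) * C2) * ENNReal.ofReal (((2:ℝ)^j)^d * a⁻¹) * w := by
    rw [high_id2 hψ hΨ hφ hτ, FunLike.coe_smul, eLpNorm_const_smul, ← ha]
    have e : ‖((a⁻¹ : ℝ) : ℂ)‖ₑ = ENNReal.ofReal a⁻¹ := by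
      rw [← ofReal_norm, Complex.norm_real, Real.norm_of_nonneg (by positivity)]
    rw [e]
    calc _ ≤ ENNReal.ofReal a⁻¹ * (n1 (GG n) * (C2 * ENNReal.ofReal (((2:ℝ)^j)^d) * w)) := by
            gcongr
            refine (cv_young p₁ hp1 hp₁ _ _).trans ?_
            rw [n1_dil (by positivity)]
            gcongr; exact h2 _ (by positivity) _
      _ = (0 + n1 (GG n) * C2) * (ENNReal.ofReal (((2:ℝ)^j)^d) * ENNReal.ofReal a⁻¹) * w := by ring
      _ ≤ _ := by
            rw [ENNReal.ofReal_mul (by positivity)]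
            gcongr; simp
  have hm := min_pow ha0 hb0 hb
  rcases min_le_iff.1 (le_refl (min 1 a⁻¹)) with h | h
  · refine k1.trans ?_
    have : 1 ≤ a^(-b) := h.trans hm
    gcongr
  · refine k2.trans ?_
    have : a⁻¹ ≤ a^(-b) := h.trans hm
    gcongr

end ST

section ST2
variable {ψ₀ Ψ : SchwartzMap (Rn n) ℝ}

/-- Besov norm of a complex Schwartz function -/
def BN (ψ₀ Ψ : SchwartzMap (Rn n) ℝ) (s : ℝ) (p q : ℝ≥0∞) (g : SC n) : ℝ≥0∞ :=
  eLpNorm (cv (Q ψ₀ Ψ 0) g) p volume +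
      (∑' j : ℕ, (ENNReal.ofReal ((2:ℝ) ^ ((j:ℝ) * s)) *
        eLpNorm (cv (Q ψ₀ Ψ (j+1)) g) p volume) ^ q.toReal) ^ (1 / q.toReal)

/-- weighted blocks -/
def cc (ψ₀ Ψ : SchwartzMap (Rn n) ℝ) (s : ℝ) (p : ℝ≥0∞) (g : SC n) : ℕ → ℝ≥0∞
  | 0 => eLpNorm (cv (Q ψ₀ Ψ 0) g) p volume
  | j + 1 => ENNReal.ofReal ((2:ℝ) ^ ((j:ℝ) * s)) * eLpNorm (cv (Q ψ₀ Ψ (j+1)) g) p volume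

theorem sc_add_le (p : ℝ≥0∞) (hp : 1 ≤ p) (f g : SC n) :
    eLpNorm (f + g : SC n) p volume ≤ eLpNorm f p volume + eLpNorm g p volume := by
  rw [FunLike.coe_add]
  exact eLpNorm_add_le f.continuous.aestronglyMeasurable g.continuous.aestronglyMeasurable hp

theorem cc_sum_le (s : ℝ) (p q : ℝ≥0∞) (hq : 1 ≤ q) (hq' : q < ∞) (g : SC n) :
    (∑' j, (cc ψ₀ Ψ s p g j)^q.toReal)^(1/q.toReal) ≤ BN ψ₀ Ψ s p q g := by
  have h1 := toReal_one_le hq hq'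
  rw [tsum_eq_zero_add' ENNReal.summable, BN]
  refine (ENNReal.rpow_add_le_add_rpow _ _ (by positivity) ?_).trans ?_
  · rw [div_le_one (by linarith)]; exact h1
  · simp only [cc]
    rw [one_div, ENNReal.rpow_rpow_inv (by linarith)]

theorem cc_le (s : ℝ) (p q : ℝ≥0∞) (hq : 1 ≤ q) (hq' : q < ∞) (g : SC n) (j : ℕ) :
    cc ψ₀ Ψ s p g j ≤ BN ψ₀ Ψ s p q g := by
  have h1 := toReal_one_le hq hq'
  refine le_trans ?_ (cc_sum_le s p q hq hq' g)
  rw [one_div, ENNReal.le_rpow_inv_iff (by linarith)]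
  exact ENNReal.le_tsum j

theorem W_le (s : ℝ) (hs : 0 ≤ s) (p : ℝ≥0∞) (hp : 1 ≤ p) (g : SC n) (j : ℕ) :
    ENNReal.ofReal ((2:ℝ) ^ ((j:ℝ) * s)) * eLpNorm (W ψ₀ Ψ g j) p volume ≤
      ENNReal.ofReal ((2:ℝ)^s) *
        (cc ψ₀ Ψ s p g j + cc ψ₀ Ψ s p g (j+1) + cc ψ₀ Ψ s p g (j+2)) := by
  have hA : (1:ℝ≥0∞) ≤ ENNReal.ofReal ((2:ℝ)^s) := by
    rw [ENNReal.one_le_ofReal]; exact Real.one_le_rpow (by norm_num) hs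
  have h0 : ENNReal.ofReal ((2:ℝ) ^ ((j:ℝ) * s)) * eLpNorm (cv (Q ψ₀ Ψ j) g) p volume ≤
      ENNReal.ofReal ((2:ℝ)^s) * cc ψ₀ Ψ s p g j := by
    cases j with
    | zero =>
      simp only [Nat.cast_zero, zero_mul, Real.rpow_zero, ENNReal.ofReal_one, one_mul, cc]
      exact le_mul_of_one_le_left' hA
    | succ k =>
      rw [cc, ← mul_assoc, ← ENNReal.ofReal_mul (by positivity), ← Real.rpow_add (by norm_num)]
      apply le_of_eq
      congr 4
      push_cast; ring
  have h1 : ENNReal.ofReal ((2:ℝ) ^ ((j:ℝ) * s)) * eLpNorm (cv (Q ψ₀ Ψ (j+1)) g) p volume ≤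
      ENNReal.ofReal ((2:ℝ)^s) * cc ψ₀ Ψ s p g (j+1) := le_mul_of_one_le_left' hA
  have h2 : ENNReal.ofReal ((2:ℝ) ^ ((j:ℝ) * s)) * eLpNorm (cv (Q ψ₀ Ψ (j+2)) g) p volume ≤
      ENNReal.ofReal ((2:ℝ)^s) * cc ψ₀ Ψ s p g (j+2) := by
    refine le_trans ?_ (le_mul_of_one_le_left' hA)
    rw [cc]
    gcongr
    · norm_num
    · simp
  calc _ ≤ ENNReal.ofReal ((2:ℝ) ^ ((j:ℝ) * s)) * (eLpNorm (cv (Q ψ₀ Ψ j) g) p volume +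
        eLpNorm (cv (Q ψ₀ Ψ (j+1)) g) p volume + eLpNorm (cv (Q ψ₀ Ψ (j+2)) g) p volume) := by
          gcongr
          refine (sc_add_le p hp _ _).trans ?_
          gcongr
          exact sc_add_le p hp _ _
    _ ≤ _ := by
      rw [mul_add, mul_add, mul_add, mul_add]
      gcongr

theorem rpow3 (x y z : ℝ≥0∞) {q : ℝ} (hq : 0 ≤ q) :
    (x + y + z)^q ≤ 3^q * (x^q + y^q + z^q) := by
  set m := max (max x y) z
  have h1 : x + y + z ≤ 3 * m := by
    calc x + y + z ≤ m + m + m := by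
          gcongr <;> simp [m]
      _ = _ := by ring
  calc _ ≤ (3 * m)^q := by gcongr
    _ = 3^q * m^q := ENNReal.mul_rpow_of_nonneg _ _ hq
    _ ≤ _ := by
      gcongr
      rcases max_choice (max x y) z with h | h
      · rcases max_choice x y with h' | h'
        · rw [show m = x from h.trans h']; exact le_add_right (le_add_right le_rfl)
        · rw [show m = y from h.trans h']; exact le_add_right (le_add_left le_rfl)
      · rw [show m = z from h]; exact le_add_left le_rfl

theorem sum3 (c : ℕ → ℝ≥0∞) (A : ℝ≥0∞) {q : ℝ} (hq : 1 ≤ q) :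
    (∑' j, (A * (c j + c (j+1) + c (j+2)))^q)^(1/q) ≤ 9 * A * (∑' j, c j^q)^(1/q) := by
  have hq0 : 0 < q := by linarith
  set S := ∑' j, c j^q
  have s1 : ∑' j, c (j+1)^q ≤ S := ENNReal.tsum_comp_le_tsum_of_injective (add_left_injective 1) (fun j => c j^q)
  have s2 : ∑' j, c (j+2)^q ≤ S := ENNReal.tsum_comp_le_tsum_of_injective (add_left_injective 2) (fun j => c j^q)
  have h : ∑' j, (A * (c j + c (j+1) + c (j+2)))^q ≤ (9 * A)^q * S := by
    calc _ ≤ ∑' j, A^q * (3^q * (c j^q + c (j+1)^q + c (j+2)^q)) := by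
          refine ENNReal.tsum_le_tsum fun j => ?_
          rw [ENNReal.mul_rpow_of_nonneg _ _ hq0.le]
          gcongr
          exact rpow3 _ _ _ hq0.le
      _ = A^q * (3^q * (S + ∑' j, c (j+1)^q + ∑' j, c (j+2)^q)) := by
          rw [ENNReal.tsum_mul_left, ENNReal.tsum_mul_left, ENNReal.tsum_add, ENNReal.tsum_add]
      _ ≤ A^q * (3^q * (S + S + S)) := by gcongr
      _ = A^q * (3^q * (3 ^ (1:ℝ) * S)) := by rw [ENNReal.rpow_one]; ring
      _ ≤ A^q * (3^q * (3 ^ q * S)) := by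
          gcongr
          norm_num
      _ = _ := by
          rw [ENNReal.mul_rpow_of_nonneg _ _ hq0.le, show (9:ℝ≥0∞) = 3 * 3 by norm_num,
            ENNReal.mul_rpow_of_nonneg _ _ hq0.le]
          ring
  calc _ ≤ ((9 * A)^q * S)^(1/q) := by gcongr
    _ = _ := by
      rw [ENNReal.mul_rpow_of_nonneg _ _ (by positivity), one_div, ENNReal.rpow_rpow_inv hq0.ne']

theorem single_time (hψ : IsLPF n ψ₀) (hΨ : IsLowPiece ψ₀ Ψ)
    (p₀ p₁ : ℝ≥0∞) (hp₀ : 1 ≤ p₀) (hp₀₁ : p₀ ≤ p₁) (hp₁ : p₁ < ∞)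
    (s₀ s₁ : ℝ) (hs₀ : 0 < s₀)
    (q : ℝ≥0∞) (hq : 1 ≤ q) (hq' : q < ∞)
    (σ : ℝ) (hσdef : σ = s₁ - s₀ + (n:ℝ) * (1/p₀.toReal - 1/p₁.toReal))
    (hσ0 : 0 < σ) (hσ2 : σ < 2) :
    ∃ C : ℝ≥0∞, C ≠ ∞ ∧ ∀ (τ : ℝ), 0 < τ → τ ≤ 1 → ∀ (U : SC n),
      BN ψ₀ Ψ s₁ p₁ q (cv (hk n τ) U) ≤ C * ENNReal.ofReal (τ^(-(σ/2))) * BN ψ₀ Ψ s₀ p₀ q U := by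
  obtain ⟨C1, hC1, h1⟩ := high_bd hψ hΨ p₀ p₁ hp₀ hp₀₁ hp₁ (b := σ/2) (by linarith) (by linarith)
  obtain ⟨C2, hC2, h2⟩ := cv_bern p₀ p₁ hp₀ hp₀₁ hp₁ (cx Ψ)
  have hq1 := toReal_one_le hq hq'
  have hp1 : 1 ≤ p₁ := hp₀.trans hp₀₁
  have hd1 : dil 1 (cx Ψ) = cx Ψ := by
    ext x; rw [dil_apply one_ne_zero]; simp
  refine ⟨n1 (gauss n) * C2 * 2 + 9 * (C1 * ENNReal.ofReal ((2:ℝ)^s₀)), ?_, fun τ hτ hτ1 U => ?_⟩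
  · refine ENNReal.add_ne_top.2 ⟨?_, ?_⟩
    · exact ENNReal.mul_ne_top (ENNReal.mul_ne_top (n1_ne_top _) hC2) (by norm_num)
    · exact ENNReal.mul_ne_top (by norm_num) (ENNReal.mul_ne_top hC1 (by simp))
  set B := BN ψ₀ Ψ s₀ p₀ q U
  set R := ENNReal.ofReal (τ^(-(σ/2)))
  have hR : 1 ≤ R := by
    rw [ENNReal.one_le_ofReal]
    exact Real.one_le_rpow_of_pos_of_le_one_of_nonpos hτ hτ1 (by linarith)
  rw [add_mul, add_mul, BN]
  refine add_le_add ?_ ?_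
  · rw [low_id hψ hΨ]
    refine (cv_young p₁ hp1 hp₁ _ _).trans ?_
    rw [n1_hk hτ]
    have e1 := h2 1 one_pos (cv (Q ψ₀ Ψ 0) U + cv (Q ψ₀ Ψ 1) U)
    rw [hd1, Real.one_rpow, ENNReal.ofReal_one, mul_one] at e1
    have c0 := cc_le (ψ₀ := ψ₀) (Ψ := Ψ) s₀ p₀ q hq hq' U 0
    have c1 := cc_le (ψ₀ := ψ₀) (Ψ := Ψ) s₀ p₀ q hq hq' U 1
    simp only [cc, Nat.cast_zero, zero_mul, Real.rpow_zero, ENNReal.ofReal_one, one_mul] at c0 c1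
    calc _ ≤ n1 (gauss n) * (C2 * (B + B)) := by
          gcongr
          refine e1.trans ?_
          gcongr
          exact (sc_add_le p₀ hp₀ _ _).trans (add_le_add c0 c1)
      _ = n1 (gauss n) * C2 * 2 * 1 * B := by ring
      _ ≤ _ := by gcongr
  · have key : ∀ j : ℕ, ENNReal.ofReal ((2:ℝ) ^ ((j:ℝ) * s₁)) *
        eLpNorm (cv (Q ψ₀ Ψ (j+1)) (cv (hk n τ) U)) p₁ volume ≤
        (C1 * R * ENNReal.ofReal ((2:ℝ)^s₀)) * (cc ψ₀ Ψ s₀ p₀ U j + cc ψ₀ Ψ s₀ p₀ U (j+1) + cc ψ₀ Ψ s₀ p₀ U (j+2)) := by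
      intro j
      have e : (2:ℝ) ^ ((j:ℝ) * s₁) * (((2:ℝ)^j)^((n:ℝ) * (1/p₀.toReal - 1/p₁.toReal)) * (((2:ℝ)^j)^2*τ)^(-(σ/2)))
          = τ^(-(σ/2)) * (2:ℝ) ^ ((j:ℝ) * s₀) := by
        rw [Real.mul_rpow (by positivity) hτ.le, ← Real.rpow_natCast 2 j, ← Real.rpow_natCast _ 2,
          ← Real.rpow_mul (by norm_num), ← Real.rpow_mul (by norm_num), ← Real.rpow_mul (by norm_num)]
        rw [← mul_assoc, ← mul_assoc, ← Real.rpow_add (by norm_num), ← Real.rpow_add (by norm_num), mul_comm]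
        congr 2
        push_cast
        rw [hσdef]; ring
      calc _ ≤ ENNReal.ofReal ((2:ℝ) ^ ((j:ℝ) * s₁)) * (C1 * ENNReal.ofReal (((2:ℝ)^j)^((n:ℝ) * (1/p₀.toReal - 1/p₁.toReal)) * (((2:ℝ)^j)^2*τ)^(-(σ/2))) *
          eLpNorm (W ψ₀ Ψ U j) p₀ volume) := by
            gcongr; exact h1 τ hτ U j
        _ = C1 * ENNReal.ofReal ((2:ℝ) ^ ((j:ℝ) * s₁) * (((2:ℝ)^j)^((n:ℝ) * (1/p₀.toReal - 1/p₁.toReal)) * (((2:ℝ)^j)^2*τ)^(-(σ/2)))) *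
          eLpNorm (W ψ₀ Ψ U j) p₀ volume := by
            rw [ENNReal.ofReal_mul (p := (2:ℝ) ^ ((j:ℝ) * s₁)) (by positivity)]; ring
        _ = C1 * R * (ENNReal.ofReal ((2:ℝ) ^ ((j:ℝ) * s₀)) * eLpNorm (W ψ₀ Ψ U j) p₀ volume) := by
            rw [e, ENNReal.ofReal_mul (by positivity)]; ring
        _ ≤ C1 * R * (ENNReal.ofReal ((2:ℝ)^s₀) * (cc ψ₀ Ψ s₀ p₀ U j + cc ψ₀ Ψ s₀ p₀ U (j+1) + cc ψ₀ Ψ s₀ p₀ U (j+2))) := by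
            gcongr _ * ?_
            exact W_le s₀ hs₀.le p₀ hp₀ U j
        _ = _ := by ring
    calc _ ≤ (∑' j, ((C1 * R * ENNReal.ofReal ((2:ℝ)^s₀)) * (cc ψ₀ Ψ s₀ p₀ U j + cc ψ₀ Ψ s₀ p₀ U (j+1) + cc ψ₀ Ψ s₀ p₀ U (j+2)))^q.toReal)^(1/q.toReal) := by
          refine ENNReal.rpow_le_rpow (ENNReal.tsum_le_tsum fun j => ?_) (by positivity)
          exact ENNReal.rpow_le_rpow (key j) (by positivity)
      _ ≤ 9 * (C1 * R * ENNReal.ofReal ((2:ℝ)^s₀)) * B := by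
          refine (sum3 _ _ hq1).trans ?_
          gcongr
          exact cc_sum_le s₀ p₀ q hq hq' U
      _ = _ := by ring

end ST2

section EMB
variable {ψ₀ Ψ : SchwartzMap (Rn n) ℝ}

theorem sum_cv (hψ : IsLPF n ψ₀) (hΨ : IsLowPiece ψ₀ Ψ) (U : SC n) (J : ℕ) :
    ∑ i ∈ Finset.range (J+1), cv (Q ψ₀ Ψ i) U = cv (dil ((2:ℝ)^J) (cx Ψ)) U := by
  refine ft_ext fun ξ => ?_
  have h : ∀ (s : Finset ℕ), 𝓕 (∑ i ∈ s, cv (Q ψ₀ Ψ i) U) ξ = (∑ i ∈ s, 𝓕 (Q ψ₀ Ψ i) ξ) * 𝓕 U ξ := by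
    intro s
    induction s using Finset.cons_induction with
    | empty =>
      have := ft_smul (0:ℂ) U ξ
      rw [zero_smul, zero_mul] at this
      simpa using this
    | cons a s ha ih => rw [Finset.sum_cons, Finset.sum_cons, ft_add, ft_cv, ih, add_mul]
  rw [h, ft_Q_sum hψ hΨ, ft_cv, ft_dil (by positivity), ft_cx]

theorem sum_cv_le (p : ℝ≥0∞) (hp : 1 ≤ p) (U : SC n) (s : Finset ℕ) :
    eLpNorm (∑ i ∈ s, cv (Q ψ₀ Ψ i) U : SC n) p volume ≤ ∑ i ∈ s, eLpNorm (cv (Q ψ₀ Ψ i) U) p volume := by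
  induction s using Finset.cons_induction with
  | empty => simp
  | cons a s ha ih =>
    rw [Finset.sum_cons, Finset.sum_cons]
    exact (sc_add_le p hp _ _).trans (by gcongr)

theorem int_low (hψ : IsLPF n ψ₀) (hΨ : IsLowPiece ψ₀ Ψ) : ∫ z, cx Ψ z = 1 := by
  have h1 : ftC Ψ (0 : Rn n) = 1 := low_one hψ hΨ (by simp)
  rw [ftC, Real.fourier_eq] at h1
  simp only [inner_zero_right, neg_zero, AddChar.map_zero_eq_one, one_smul] at h1
  rw [← h1]
  simp only [cx_apply]

theorem cv_dil_eq {l : ℝ} (hl : 0 < l) (f U : SC n) (x : Rn n) :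
    cv (dil l f) U x = ∫ z, f z * U (x - l⁻¹ • z) := by
  rw [cv_apply]
  have h := Measure.integral_comp_smul (volume : Measure (Rn n)) (fun z => f z * U (x - l⁻¹ • z)) l
  simp only [inv_smul_smul₀ hl.ne'] at h
  have h2 : ∫ z, f z * U (x - l⁻¹ • z) = (l^n : ℝ) • ∫ y, f (l • y) * U (x - y) := by
    rw [h, smul_smul, finrank_euclideanSpace_fin, abs_of_pos (by positivity), mul_inv_cancel₀ (by positivity), one_smul]
  rw [h2, ← integral_smul]
  congr 1
  ext y
  rw [dil_apply hl.ne', Complex.real_smul, mul_assoc]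
  push_cast
  rfl

theorem cv_tendsto (hψ : IsLPF n ψ₀) (hΨ : IsLowPiece ψ₀ Ψ) (U : SC n) (x : Rn n) :
    Tendsto (fun J : ℕ => cv (dil ((2:ℝ)^J) (cx Ψ)) U x) atTop (nhds (U x)) := by
  have e : U x = ∫ z, cx Ψ z * U x := by
    rw [integral_mul_const, int_low hψ hΨ, one_mul]
  rw [e]
  simp only [fun J : ℕ => cv_dil_eq (show (0:ℝ) < 2^J by positivity) (cx Ψ) U x]
  refine tendsto_integral_of_dominated_convergence
    (fun z => ‖cx Ψ z‖ * SchwartzMap.seminorm ℝ 0 0 U) (fun J => ?_) ?_ (fun J => ?_) ?_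
  · have h1 := (cx Ψ).continuous
    have h2 := U.continuous
    exact Continuous.aestronglyMeasurable (by fun_prop)
  · exact (cx Ψ).integrable.norm.mul_const _
  · refine Eventually.of_forall fun z => ?_
    rw [norm_mul]
    gcongr
    exact SchwartzMap.norm_le_seminorm ℝ U _
  · refine Eventually.of_forall fun z => ?_
    refine Tendsto.const_mul _ ?_
    refine (U.continuous.tendsto x).comp ?_
    have h1 : Tendsto (fun J : ℕ => ((2:ℝ)^J)⁻¹) atTop (nhds 0) :=
      tendsto_inv_atTop_zero.comp (tendsto_pow_atTop_atTop_of_one_lt one_lt_two)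
    have h2 := (tendsto_const_nhds (x := x)).sub (h1.smul_const z)
    simpa using h2

theorem embed (hψ : IsLPF n ψ₀) (hΨ : IsLowPiece ψ₀ Ψ) (p q : ℝ≥0∞) (hp : 1 ≤ p)
    (hq : 1 ≤ q) (hq' : q < ∞) (s : ℝ) (hs : 0 < s) :
    ∃ C : ℝ≥0∞, C ≠ ∞ ∧ ∀ U : SC n, eLpNorm U p volume ≤ C * BN ψ₀ Ψ s p q U := by
  set r : ℝ≥0∞ := ENNReal.ofReal ((2:ℝ)^(-s)) with hr
  have hr1 : r < 1 := by
    rw [hr, ENNReal.ofReal_lt_one]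
    exact Real.rpow_lt_one_of_one_lt_of_neg one_lt_two (by linarith)
  refine ⟨1 + (1 - r)⁻¹, ?_, fun U => ?_⟩
  · refine ENNReal.add_ne_top.2 ⟨by simp, ?_⟩
    rw [Ne, ENNReal.inv_eq_top, tsub_eq_zero_iff_le]
    exact not_le.2 hr1
  set B := BN ψ₀ Ψ s p q U
  have hb : ∀ J : ℕ, eLpNorm (cv (dil ((2:ℝ)^J) (cx Ψ)) U) p volume ≤ (1 + (1 - r)⁻¹) * B := by
    intro J
    rw [← sum_cv hψ hΨ]
    refine (sum_cv_le p hp U _).trans ?_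
    rw [Finset.sum_range_succ', add_comm, add_mul, one_mul]
    refine add_le_add (cc_le s p q hq hq' U 0) ?_
    calc _ ≤ ∑ j ∈ Finset.range J, r^j * B := by
          refine Finset.sum_le_sum fun j _ => ?_
          have h1 := cc_le (ψ₀ := ψ₀) (Ψ := Ψ) s p q hq hq' U (j+1)
          rw [cc] at h1
          have e : r^j * ENNReal.ofReal ((2:ℝ) ^ ((j:ℝ) * s)) = 1 := by
            rw [hr, ← ENNReal.ofReal_pow (by positivity), ← ENNReal.ofReal_mul (by positivity),
              ← Real.rpow_mul_natCast (by norm_num), ← Real.rpow_add (by norm_num)]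
            rw [show -s * (j:ℝ) + j * s = 0 by ring]; simp
          calc _ = r^j * (ENNReal.ofReal ((2:ℝ) ^ ((j:ℝ) * s)) * eLpNorm (cv (Q ψ₀ Ψ (j+1)) U) p volume) := by
                rw [← mul_assoc, e, one_mul]
            _ ≤ _ := by gcongr
      _ = (∑ j ∈ Finset.range J, r^j) * B := by rw [Finset.sum_mul]
      _ ≤ _ := by
          gcongr
          rw [← ENNReal.tsum_geometric]
          exact ENNReal.sum_le_tsum _
  refine (Lp.eLpNorm_lim_le_liminf_eLpNorm (f := fun J : ℕ => ⇑(cv (dil ((2:ℝ)^J) (cx Ψ)) U))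
    (fun J => (SchwartzMap.continuous _).aestronglyMeasurable) U
    (Eventually.of_forall fun x => cv_tendsto hψ hΨ U x)).trans ?_
  refine (liminf_le_liminf (Eventually.of_forall hb)).trans ?_
  simp

end EMB

section MK

theorem conv_apply (P F : Rn n → ℝ) (x : Rn n) :
    MeasureTheory.convolution P F (ContinuousLinearMap.mul ℝ ℝ) volume x = ∫ y, P y * F (x - y) := by
  rw [MeasureTheory.convolution_def]; rfl

theorem conv_sm (ν : Measure ℝ) (H : ℝ → Rn n → ℝ)
    (hH : StronglyMeasurable (Function.uncurry H)) (P : Rn n → ℝ) (hP : Continuous P) :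
    StronglyMeasurable (Function.uncurry (fun (x : Rn n) (s : ℝ) =>
      MeasureTheory.convolution P (H s) (ContinuousLinearMap.mul ℝ ℝ) volume x)) := by
  have h : StronglyMeasurable (Function.uncurry
      (fun (z : Rn n × ℝ) (y : Rn n) => P y * H z.2 (z.1 - y))) := by
    refine StronglyMeasurable.mul (hP.stronglyMeasurable.comp_measurable measurable_snd) ?_
    exact hH.comp_measurable (g := fun w : (Rn n × ℝ) × Rn n => (w.1.2, w.1.1 - w.2))
      (by fun_prop)
  have h2 := h.integral_prod_right (ν := volume)
  simpa only [Function.uncurry_def, conv_apply] using h2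

theorem conv_meas (ν : Measure ℝ) (H : ℝ → Rn n → ℝ)
    (hH : StronglyMeasurable (Function.uncurry H)) (P : Rn n → ℝ) (hP : Continuous P)
    (p : ℝ≥0∞) (hp : 1 ≤ p) (hp' : p < ∞) :
    Measurable (fun s => eLpNorm (MeasureTheory.convolution P (H s) (ContinuousLinearMap.mul ℝ ℝ) volume)
      p volume) := by
  simp only [eLpNorm_eq_lintegral_rpow_enorm_toReal (zero_lt_one.trans_le hp).ne' hp'.ne]
  have h := (conv_sm ν H hH P hP).enorm.pow_const p.toReal
  exact (Measurable.lintegral_prod_left (f := fun (x : Rn n) s => ‖MeasureTheory.convolution P (H s) (ContinuousLinearMap.mul ℝ ℝ) volume x‖ₑ ^ p.toReal) h).pow_const _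

theorem mink1 (ν : Measure ℝ) [SFinite ν] (H : ℝ → Rn n → ℝ)
    (hH : StronglyMeasurable (Function.uncurry H)) (V : ℝ → SC n)
    (hV : ∀ᵐ s ∂ν, ∀ x, (H s x : ℂ) = V s x)
    (p₀ : ℝ≥0∞) (hp₀ : 1 ≤ p₀) (hp₀' : p₀ < ∞)
    (hfin : ∫⁻ s, eLpNorm (V s) p₀ volume ∂ν ≠ ∞)
    (P : Rn n → ℝ) (hP : Continuous P) (Kc : SC n) (hK : ∀ x, (P x : ℂ) = Kc x)
    (p : ℝ≥0∞) (hp : 1 ≤ p) (hp' : p < ∞) :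
    eLpNorm (MeasureTheory.convolution P (fun x => ∫ s, H s x ∂ν) (ContinuousLinearMap.mul ℝ ℝ) volume)
      p volume ≤ ∫⁻ s, eLpNorm (MeasureTheory.convolution P (H s) (ContinuousLinearMap.mul ℝ ℝ) volume)
      p volume ∂ν := by
  obtain ⟨C, hC, hsup⟩ := cv_sup p₀ hp₀ hp₀' Kc
  have pw : ∀ x, ‖MeasureTheory.convolution P (fun x => ∫ s, H s x ∂ν) (ContinuousLinearMap.mul ℝ ℝ) volume x‖ₑ
      ≤ ∫⁻ s, ‖MeasureTheory.convolution P (H s) (ContinuousLinearMap.mul ℝ ℝ) volume x‖ₑ ∂ν := by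
    intro x
    have hsm : StronglyMeasurable (Function.uncurry fun (s : ℝ) (y : Rn n) => P y * H s (x - y)) := by
      refine StronglyMeasurable.mul (hP.stronglyMeasurable.comp_measurable measurable_snd) ?_
      exact hH.comp_measurable (g := fun w : ℝ × Rn n => (w.1, x - w.2)) (by fun_prop)
    have hi : Integrable (Function.uncurry fun (s : ℝ) (y : Rn n) => P y * H s (x - y)) (ν.prod volume) := by
      refine ⟨hsm.aestronglyMeasurable, ?_⟩
      rw [hasFiniteIntegral_def, lintegral_prod _ hsm.enorm.aemeasurable]
      calc _ ≤ ∫⁻ s, C * eLpNorm (V s) p₀ volume ∂ν := by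
            refine lintegral_mono_ae ?_
            filter_upwards [hV] with s hs
            refine le_trans (le_of_eq ?_) (hsup (V s) x)
            refine lintegral_congr fun y => ?_
            rw [← hK, ← hs, Function.uncurry, enorm_mul]
            congr 1 <;> rw [← ofReal_norm, ← ofReal_norm, Complex.norm_real]
        _ = C * ∫⁻ s, eLpNorm (V s) p₀ volume ∂ν := lintegral_const_mul' _ _ hC
        _ < ∞ := ENNReal.mul_lt_top hC.lt_top hfin.lt_top
    have e : MeasureTheory.convolution P (fun x => ∫ s, H s x ∂ν) (ContinuousLinearMap.mul ℝ ℝ) volume x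
        = ∫ s, MeasureTheory.convolution P (H s) (ContinuousLinearMap.mul ℝ ℝ) volume x ∂ν := by
      simp only [conv_apply, ← integral_const_mul]
      exact (integral_integral_swap hi).symm
    rw [e]
    exact enorm_integral_le_lintegral_enorm _
  simp only [eLpNorm_eq_lintegral_rpow_enorm_toReal (zero_lt_one.trans_le hp).ne' hp'.ne]
  refine le_trans ?_ (minkowski_int volume ν (toReal_one_le hp hp') _ (conv_sm ν H hH P hP).enorm)
  gcongr with x
  exact pw x

theorem lpKernel_cont (ψ₀ : SchwartzMap (Rn n) ℝ) (j : ℤ) : Continuous (lpKernel ψ₀ j) := by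
  have := ψ₀.continuous
  unfold lpKernel
  fun_prop

theorem mink_besov (ψ₀ Ψ : SchwartzMap (Rn n) ℝ) (ν : Measure ℝ) [SFinite ν] (H : ℝ → Rn n → ℝ)
    (hH : StronglyMeasurable (Function.uncurry H)) (V : ℝ → SC n)
    (hV : ∀ᵐ s ∂ν, ∀ x, (H s x : ℂ) = V s x)
    (p₀ : ℝ≥0∞) (hp₀ : 1 ≤ p₀) (hp₀' : p₀ < ∞)
    (hfin : ∫⁻ s, eLpNorm (V s) p₀ volume ∂ν ≠ ∞)
    (p : ℝ≥0∞) (hp : 1 ≤ p) (hp' : p < ∞) (q : ℝ≥0∞) (hq : 1 ≤ q) (hq' : q < ∞) (s₁ : ℝ) :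
    besovNorm ψ₀ Ψ s₁ p q (fun x => ∫ s, H s x ∂ν) ≤ ∫⁻ s, besovNorm ψ₀ Ψ s₁ p q (H s) ∂ν := by
  simp only [besovNorm, if_neg hq'.ne]
  rw [lintegral_add_left (conv_meas ν H hH _ Ψ.continuous p hp hp')]
  refine add_le_add ?_ ?_
  · exact mink1 ν H hH V hV p₀ hp₀ hp₀' hfin _ Ψ.continuous (cx Ψ) (fun x => (cx_apply _ _).symm) p hp hp'
  · set f : ℕ → ℝ → ℝ≥0∞ := fun j s => ENNReal.ofReal ((2:ℝ) ^ ((j:ℝ) * s₁)) * eLpNorm (lpProj ψ₀ (j:ℤ) (H s)) p volume with hf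
    have hfm : ∀ j, Measurable (f j) := fun j =>
      (conv_meas ν H hH _ (lpKernel_cont ψ₀ j) p hp hp').const_mul _
    have hfm' : Measurable (Function.uncurry f) := measurable_from_prod_countable_right hfm
    have hm := minkowski_int Measure.count ν (toReal_one_le hq hq') f hfm'
    simp only [lintegral_count] at hm
    refine le_trans ?_ hm
    refine ENNReal.rpow_le_rpow (ENNReal.tsum_le_tsum fun j => ENNReal.rpow_le_rpow ?_ (by positivity)) (by positivity)
    rw [lintegral_const_mul' _ _ ENNReal.ofReal_ne_top]
    gcongr
    exact mink1 ν H hH V hV p₀ hp₀ hp₀' hfin _ (lpKernel_cont ψ₀ j) (dil ((2:ℝ)^j) (cx ψ₀)) (lpKernel_cx ψ₀ j) p hp hp'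

end MK

section BETA

theorem int_pow {t k : ℝ} (ht : 0 < t) (hk : k < 1) :
    ∫⁻ s in Set.Ioo 0 t, ENNReal.ofReal (s^(-k)) = ENNReal.ofReal (t^(1-k)/(1-k)) := by
  have hi : IntervalIntegrable (fun s : ℝ => s^(-k)) volume 0 t :=
    intervalIntegral.intervalIntegrable_rpow' (by linarith)
  rw [intervalIntegrable_iff_integrableOn_Ioo_of_le ht.le] at hi
  rw [← ofReal_integral_eq_lintegral_ofReal hi]
  · rw [← integral_Ioc_eq_integral_Ioo, ← intervalIntegral.integral_of_le ht.le, integral_rpow (Or.inl (by linarith))]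
    rw [Real.zero_rpow (by linarith), show -k+1 = 1-k by ring, sub_zero]
  · filter_upwards [ae_restrict_mem measurableSet_Ioo] with s hs
    exact Real.rpow_nonneg hs.1.le _

theorem int_pow' {t k : ℝ} (ht : 0 < t) (hk : k < 1) :
    ∫⁻ s in Set.Ioo 0 t, ENNReal.ofReal ((t-s)^(-k)) = ENNReal.ofReal (t^(1-k)/(1-k)) := by
  rw [← int_pow ht hk, ← lintegral_indicator measurableSet_Ioo, ← lintegral_indicator measurableSet_Ioo,
    ← lintegral_sub_left_eq_self _ t]
  refine lintegral_congr fun s => ?_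
  by_cases h : s ∈ Set.Ioo 0 t
  · rw [Set.indicator_of_mem h, Set.indicator_of_mem (by constructor <;> linarith [h.1, h.2])]
    simp
  · rw [Set.indicator_of_notMem h, Set.indicator_of_notMem]
    intro h'; apply h
    constructor <;> linarith [h'.1, h'.2]

theorem beta_bd {t a k : ℝ} (ht : 0 < t) (ha0 : 0 ≤ a) (ha : a < 1) (hk0 : 0 ≤ k) (hk : k < 1) :
    ∫⁻ s in Set.Ioo 0 t, ENNReal.ofReal ((t-s)^(-a)) * ENNReal.ofReal (s^(-k)) ≤
      ENNReal.ofReal ((2^a/(1-k) + 2^k/(1-a)) * t^(1-a-k)) := by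
  calc _ ≤ ∫⁻ s in Set.Ioo 0 t, (ENNReal.ofReal ((t/2)^(-a)) * ENNReal.ofReal (s^(-k)) +
        ENNReal.ofReal ((t/2)^(-k)) * ENNReal.ofReal ((t-s)^(-a))) := by
        refine setLIntegral_mono' measurableSet_Ioo fun s hs => ?_
        by_cases h : s ≤ t/2
        · refine le_add_right ?_
          gcongr ENNReal.ofReal ?_ * _
          exact Real.rpow_le_rpow_of_nonpos (by linarith) (by linarith) (by linarith)
        · push Not at h
          refine le_add_left ?_
          rw [mul_comm]
          gcongr ENNReal.ofReal ?_ * _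
          exact Real.rpow_le_rpow_of_nonpos (by linarith) (by linarith) (by linarith)
    _ = ENNReal.ofReal ((t/2)^(-a)) * ENNReal.ofReal (t^(1-k)/(1-k)) +
        ENNReal.ofReal ((t/2)^(-k)) * ENNReal.ofReal (t^(1-a)/(1-a)) := by
        rw [lintegral_add_left (by fun_prop), lintegral_const_mul' _ _ ENNReal.ofReal_ne_top,
          lintegral_const_mul' _ _ ENNReal.ofReal_ne_top, int_pow ht hk, int_pow' ht ha]
    _ = _ := by
        have h1k : 0 < 1 - k := by linarith
        have h1a : 0 < 1 - a := by linarith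
        rw [← ENNReal.ofReal_mul (by positivity), ← ENNReal.ofReal_mul (by positivity), ← ENNReal.ofReal_add (by positivity) (by positivity)]
        congr 1
        rw [Real.div_rpow ht.le (by norm_num), Real.div_rpow ht.le (by norm_num),
          Real.rpow_neg (x := 2) (by norm_num), Real.rpow_neg (x := 2) (by norm_num)]
        have e1 : t^(1-a-k) = t^(-a) * t^(1-k) := by rw [← Real.rpow_add ht]; congr 1; ring
        have e2 : t^(1-a-k) = t^(-k) * t^(1-a) := by rw [← Real.rpow_add ht]; congr 1; ring
        rw [add_mul]
        nth_rewrite 1 [e1]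
        rw [e2]
        simp only [div_inv_eq_mul]
        ring

end BETA

theorem ut_meas {T : ℝ} (u : ℝ → Rn n → ℝ)
    (hS : ∀ t ∈ Set.Ioo (0:ℝ) T, ∃ U : SchwartzMap (Rn n) ℝ, ∀ x, U x = u t x)
    (hc : ∀ x : Rn n, ContinuousOn (fun t => u t x) (Set.Ioo (0:ℝ) T)) :
    StronglyMeasurable (Function.uncurry (fun (x : Rn n) (s : ℝ) =>
      (Set.Ioo (0:ℝ) T).indicator (fun s => u s x) s)) := by
  refine stronglyMeasurable_uncurry_of_continuous_of_stronglyMeasurable (fun s => ?_) (fun x => ?_)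
  · by_cases h : s ∈ Set.Ioo (0:ℝ) T
    · simp only [Set.indicator_of_mem h]
      obtain ⟨U, hU⟩ := hS s h
      exact U.continuous.congr hU
    · simp only [Set.indicator_of_notMem h]
      exact continuous_const
  · classical
    have := (hc x).measurable_piecewise (g := fun _ => (0:ℝ)) continuousOn_const measurableSet_Ioo
    have h2 := this.stronglyMeasurable
    rwa [show (Set.Ioo (0:ℝ) T).piecewise (fun t => u t x) (fun _ => (0:ℝ)) = (Set.Ioo (0:ℝ) T).indicator (fun s => u s x) from
      Set.piecewise_eq_indicator] at h2

theorem heat_meas {T t : ℝ} (htT : t < T) (u : ℝ → Rn n → ℝ)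
    (hS : ∀ t ∈ Set.Ioo (0:ℝ) T, ∃ U : SchwartzMap (Rn n) ℝ, ∀ x, U x = u t x)
    (hc : ∀ x : Rn n, ContinuousOn (fun t => u t x) (Set.Ioo (0:ℝ) T)) :
    StronglyMeasurable (Function.uncurry (fun (s : ℝ) (x : Rn n) =>
      (Set.Ioo (0:ℝ) t).indicator (fun s => heatOp n (t - s) (u s) x) s)) := by
  have h1 := ut_meas u hS hc
  set k : ℝ → Rn n → ℝ := fun τ x => (4 * π * τ) ^ (-(n:ℝ)/2) * Real.exp (-‖x‖^2 / (4*τ)) with hk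
  have hkm : Measurable (Function.uncurry k) := by
    simp only [hk, Function.uncurry_def]
    fun_prop
  have h2 : StronglyMeasurable (Function.uncurry (fun (z : ℝ × Rn n) (y : Rn n) =>
      k (t - z.1) y * (Set.Ioo (0:ℝ) T).indicator (fun s => u s (z.2 - y)) z.1)) := by
    refine StronglyMeasurable.mul ?_ ?_
    · exact hkm.stronglyMeasurable.comp_measurable (g := fun w : (ℝ × Rn n) × Rn n => (t - w.1.1, w.2)) (by fun_prop)
    · exact h1.comp_measurable (g := fun w : (ℝ × Rn n) × Rn n => (w.1.2 - w.2, w.1.1)) (by fun_prop)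
  have h3 := (h2.integral_prod_right (ν := volume)).indicator
    (s := {z : ℝ × Rn n | z.1 ∈ Set.Ioo 0 t}) (measurableSet_Ioo.preimage measurable_fst)
  convert h3 using 1
  ext ⟨s, x⟩
  by_cases h : s ∈ Set.Ioo 0 t
  · rw [Function.uncurry, Set.indicator_of_mem h, Set.indicator_of_mem (by exact h), heatOp, conv_apply]
    have h' : s ∈ Set.Ioo 0 T := ⟨h.1, h.2.trans htT⟩
    simp only [Set.indicator_of_mem h', hk]
  · rw [Function.uncurry, Set.indicator_of_notMem h, Set.indicator_of_notMem (by exact h)]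

/-- Duhamel operator estimate in weighted-in-time Besov spaces: with
`σ = s₁ − s₀ + n(1/p₀ − 1/p₁) ∈ (0,2)`, `0 ≤ k₀ < 1`, `k₁ = k₀ + σ/2 − 1`, if
`N = sup_{0<t<T} t^{k₀}‖u(t)‖_{B^{s₀}_{p₀,q}} < ∞` then
`t^{k₁} ‖∫₀ᵗ e^{(t−s)Δ}u(s) ds‖_{B^{s₁}_{p₁,q}} ≤ C N` for every `t ∈ (0,T)`. -/
theorem besov_duhamel_weighted_estimate
    (n : ℕ) (hn : 1 ≤ n) (ψ₀ Ψ : SchwartzMap (Rn n) ℝ)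
    (hψ : IsLPF n ψ₀) (hΨ : IsLowPiece ψ₀ Ψ)
    (p₀ p₁ : ℝ≥0∞) (hp₀ : 1 ≤ p₀) (hp₀₁ : p₀ ≤ p₁) (hp₁ : p₁ < ∞)
    (s₀ s₁ : ℝ) (hs₀ : 0 < s₀) (hs₀₁ : s₀ ≤ s₁)
    (q : ℝ≥0∞) (hq : 1 ≤ q) (hq' : q < ∞)
    (σ k₀ k₁ : ℝ) (hσdef : σ = s₁ - s₀ + (n:ℝ) * (1/p₀.toReal - 1/p₁.toReal))
    (hσ0 : 0 < σ) (hσ2 : σ < 2) (hk₀0 : 0 ≤ k₀) (hk₀1 : k₀ < 1)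
    (hk₁ : k₁ = k₀ + σ/2 - 1) :
    ∃ C : ℝ, 0 < C ∧ ∀ T : ℝ, 0 < T → T ≤ 1 → ∀ u : ℝ → Rn n → ℝ,
      (∀ t ∈ Set.Ioo (0:ℝ) T, ∃ U : SchwartzMap (Rn n) ℝ, ∀ x, U x = u t x) →
      (∀ x : Rn n, ContinuousOn (fun t => u t x) (Set.Ioo (0:ℝ) T)) →
      (⨆ t ∈ Set.Ioo (0:ℝ) T,
        ENNReal.ofReal (t ^ k₀) * besovNorm ψ₀ Ψ s₀ p₀ q (u t)) < ∞ →
      ∀ t ∈ Set.Ioo (0:ℝ) T,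
        ENNReal.ofReal (t ^ k₁) *
            besovNorm ψ₀ Ψ s₁ p₁ q (fun x => ∫ s in (0:ℝ)..t, heatOp n (t - s) (u s) x)
          ≤ ENNReal.ofReal C *
            ⨆ s ∈ Set.Ioo (0:ℝ) T,
              ENNReal.ofReal (s ^ k₀) * besovNorm ψ₀ Ψ s₀ p₀ q (u s) := by
  obtain ⟨C₁, hC₁, hst⟩ := single_time hψ hΨ p₀ p₁ hp₀ hp₀₁ hp₁ s₀ s₁ hs₀ q hq hq' σ hσdef hσ0 hσ2
  obtain ⟨C₂, hC₂, hemb⟩ := embed hψ hΨ p₀ q hp₀ hq hq' s₀ hs₀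
  set D : ℝ := 2^(σ/2)/(1-k₀) + 2^k₀/(1-σ/2) with hD
  have hp1 : 1 ≤ p₁ := hp₀.trans hp₀₁
  have hp0' : p₀ < ∞ := hp₀₁.trans_lt hp₁
  have h1k : 0 < 1 - k₀ := by linarith
  have h1s : 0 < 1 - σ/2 := by linarith
  have hD0 : 0 < D := by positivity
  refine ⟨C₁.toReal * D + 1, by positivity, fun T hT hT1 u hS hc hN t ht => ?_⟩
  set N := ⨆ t ∈ Set.Ioo (0:ℝ) T, ENNReal.ofReal (t ^ k₀) * besovNorm ψ₀ Ψ s₀ p₀ q (u t) with hNdef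
  classical
  set g : ℝ → SC n := fun s => if h : s ∈ Set.Ioo (0:ℝ) T then cx (hS s h).choose else 0 with hg
  have hgu : ∀ s ∈ Set.Ioo (0:ℝ) T, ∀ x, (u s x : ℂ) = g s x := by
    intro s hs x
    simp only [hg, dif_pos hs, cx_apply, (hS s hs).choose_spec x]
  have hB : ∀ s ∈ Set.Ioo (0:ℝ) T, BN ψ₀ Ψ s₀ p₀ q (g s) ≤ ENNReal.ofReal (s^(-k₀)) * N := by
    intro s hs
    have h1 : ENNReal.ofReal (s ^ k₀) * besovNorm ψ₀ Ψ s₀ p₀ q (u s) ≤ N :=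
      le_iSup₂ (f := fun t (_ : t ∈ Set.Ioo (0:ℝ) T) => ENNReal.ofReal (t ^ k₀) * besovNorm ψ₀ Ψ s₀ p₀ q (u t)) s hs
    have e : besovNorm ψ₀ Ψ s₀ p₀ q (u s) = BN ψ₀ Ψ s₀ p₀ q (g s) := besov_cx ψ₀ Ψ s₀ p₀ q hq' (u s) (g s) (hgu s hs)
    rw [e] at h1
    have e2 : ENNReal.ofReal (s^(-k₀)) * ENNReal.ofReal (s ^ k₀) = 1 := by
      rw [← ENNReal.ofReal_mul (Real.rpow_nonneg hs.1.le _), ← Real.rpow_add hs.1]; simp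
    calc _ = ENNReal.ofReal (s^(-k₀)) * (ENNReal.ofReal (s ^ k₀) * BN ψ₀ Ψ s₀ p₀ q (g s)) := by
          rw [← mul_assoc, e2, one_mul]
      _ ≤ _ := by gcongr
  set H : ℝ → Rn n → ℝ := fun s x => (Set.Ioo (0:ℝ) t).indicator (fun s => heatOp n (t - s) (u s) x) s with hH
  have hHm : StronglyMeasurable (Function.uncurry H) := heat_meas ht.2 u hS hc
  set V : ℝ → SC n := fun s => cv (hk n (t-s)) (g s) with hVdef
  have hV : ∀ s ∈ Set.Ioo 0 t, ∀ x, (H s x : ℂ) = V s x := by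
    intro s hs x
    simp only [hH, Set.indicator_of_mem hs]
    exact heatOp_cx (by linarith [hs.2]) (u s) (g s) (hgu s ⟨hs.1, hs.2.trans ht.2⟩) x
  set ν := (volume : Measure ℝ).restrict (Set.Ioo 0 t) with hν
  have hVae : ∀ᵐ s ∂ν, ∀ x, (H s x : ℂ) = V s x := by
    filter_upwards [ae_restrict_mem measurableSet_Ioo] with s hs using hV s hs
  have hfin : ∫⁻ s, eLpNorm (V s) p₀ volume ∂ν ≠ ∞ := by
    have hK : n1 (gauss n) * (C₂ * N) ≠ ∞ :=
      ENNReal.mul_ne_top (n1_ne_top _) (ENNReal.mul_ne_top hC₂ hN.ne)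
    refine ne_top_of_le_ne_top ?_ (b := ∫⁻ s in Set.Ioo 0 t, (n1 (gauss n) * (C₂ * N)) * ENNReal.ofReal (s^(-k₀))) ?_
    · rw [lintegral_const_mul' _ _ hK, int_pow ht.1 hk₀1]
      exact ENNReal.mul_ne_top hK ENNReal.ofReal_ne_top
    · refine setLIntegral_mono' measurableSet_Ioo fun s hs => ?_
      have hs' : s ∈ Set.Ioo 0 T := ⟨hs.1, hs.2.trans ht.2⟩
      calc _ ≤ n1 (hk n (t-s)) * eLpNorm (g s) p₀ volume := cv_young p₀ hp₀ hp0' _ _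
        _ ≤ n1 (gauss n) * (C₂ * (ENNReal.ofReal (s^(-k₀)) * N)) := by
            rw [n1_hk (by linarith [hs.2])]
            gcongr
            refine (hemb _).trans ?_
            gcongr
            exact hB s hs'
        _ = _ := by ring
  have hF : (fun x => ∫ s in (0:ℝ)..t, heatOp n (t - s) (u s) x) = fun x => ∫ s, H s x ∂ν := by
    ext x
    rw [intervalIntegral.integral_of_le ht.1.le, integral_Ioc_eq_integral_Ioo]
    refine setIntegral_congr_fun measurableSet_Ioo fun s hs => ?_
    simp only [hH, Set.indicator_of_mem hs]
  have hmain : besovNorm ψ₀ Ψ s₁ p₁ q (fun x => ∫ s in (0:ℝ)..t, heatOp n (t - s) (u s) x) ≤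
      C₁ * N * ENNReal.ofReal (D * t^(1-σ/2-k₀)) := by
    rw [hF]
    refine (mink_besov ψ₀ Ψ ν H hHm V hVae p₀ hp₀ hp0' hfin p₁ hp1 hp₁ q hq hq' s₁).trans ?_
    calc _ ≤ ∫⁻ s in Set.Ioo 0 t, (C₁ * N) * (ENNReal.ofReal ((t-s)^(-(σ/2))) * ENNReal.ofReal (s^(-k₀))) := by
          refine setLIntegral_mono' measurableSet_Ioo fun s hs => ?_
          have hs' : s ∈ Set.Ioo 0 T := ⟨hs.1, hs.2.trans ht.2⟩
          have e : besovNorm ψ₀ Ψ s₁ p₁ q (H s) = BN ψ₀ Ψ s₁ p₁ q (V s) := besov_cx ψ₀ Ψ s₁ p₁ q hq' (H s) (V s) (hV s hs)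
          rw [e]
          refine (hst (t-s) (by linarith [hs.2]) (by linarith [hs.1, ht.2]) (g s)).trans ?_
          calc _ ≤ C₁ * ENNReal.ofReal ((t-s)^(-(σ/2))) * (ENNReal.ofReal (s^(-k₀)) * N) := by
                gcongr; exact hB s hs'
            _ = _ := by ring
      _ = C₁ * N * ∫⁻ s in Set.Ioo 0 t, (ENNReal.ofReal ((t-s)^(-(σ/2))) * ENNReal.ofReal (s^(-k₀))) :=
          lintegral_const_mul' _ _ (ENNReal.mul_ne_top hC₁ hN.ne)
      _ ≤ _ := by
          gcongr
          exact beta_bd ht.1 (by linarith) (by linarith) hk₀0 hk₀1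
  have ht0 : 0 < t := ht.1
  calc _ ≤ ENNReal.ofReal (t^k₁) * (C₁ * N * ENNReal.ofReal (D * t^(1-σ/2-k₀))) := by gcongr
    _ = C₁ * ENNReal.ofReal (t^k₁ * (D * t^(1-σ/2-k₀))) * N := by
        rw [ENNReal.ofReal_mul (p := t^k₁) (by positivity)]; ring
    _ = ENNReal.ofReal (C₁.toReal * D) * N := by
        have e : t^k₁ * (D * t^(1-σ/2-k₀)) = D := by
          rw [mul_left_comm, ← Real.rpow_add ht0, hk₁]
          rw [show k₀ + σ/2 - 1 + (1 - σ/2 - k₀) = 0 by ring]; simp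
        rw [e, ENNReal.ofReal_mul ENNReal.toReal_nonneg, ENNReal.ofReal_toReal hC₁]
    _ ≤ _ := by
        gcongr
        linarith
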